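/- arXiv:2308.04752 — 2 statements merged into one kernel-verified Lean document; each statement's English description precedes it below -/
import Mathlib

section
/- For every prime m ≥ 5, there exist positive integers A and B with B < A such that b_6(An + B) ≡ 0 (mod m) for all nonnegative integers n. -/
/-- `bReg k n` is the number of `k`-regular partitions of `n`,
i.e. partitions of `n` in which no part is divisible by `k`. -/
noncomputable def bReg (k n : ℕ) : ℕ :=
  (Finset.univ.filter fun p : n.Partition => ∀ i ∈ p.parts, ¬ k ∣ i).card

/-!
The function `η(144τ) / η(24τ) = ∑ b₆(n) q^{24n + 5}` is weakly holomorphic of weight `0` on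
`Γ₀(3456)` with a real character, and its poles have order at most `4 < m`. Multiply it by `Δ^m`,
which is a power series in `q^m` modulo `m`, apply the Hecke operator at `m`, which is `U_m` modulo
`m` in positive weight, and divide by `Δ`: the result is congruent to the image of the series under
`U_m`, and the order of the poles has been divided by `m`. After finitely many rounds it is below
the least order allowed at a cusp, so that for some `s` the image under `U_{m^s}` is congruent to
a holomorphic form of positive weight.

Holomorphic forms with integral `q`-expansions form a finitely generated group, so they are finite
in number modulo `m`. For a prime `p ∤ 3456m`, the recursion relating the Hecke operators at the
powers of `p` permutes a finite set; its periodicity gives an `r` with `a(p^r n) ≡ 0 (mod m)` for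
all `n` prime to `p`. The `j` for which `24j + 5 = m^s p^r n` with `n ≡ 1 (mod p)` form an
arithmetic progression.
-/

namespace RegularPartition

open UpperHalfPlane ModularForm Matrix Matrix.SpecialLinearGroup Filter Asymptotics
open Function.Periodic (qParam qParam_ne_zero norm_qParam_lt_one)
open scoped MatrixGroups Manifold ModularForm PowerSeries

section HeckeOnSequences

variable {R : Type*} [CommRing R] {p : ℕ} {c : R}

/-- The Hecke operator `a ↦ U_p a + c V_p a` on coefficient sequences; on weight `k` forms with
character `χ`, the constant `c` is `χ(p) p ^ (k - 1)`. -/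
def heckeSeq (p : ℕ) (c : R) (a : ℕ → R) (n : ℕ) : R :=
  a (p * n) + if p ∣ n then c * a (n / p) else 0

/-- One step of the recursion `s_{r+1} = T_p s_r - c s_{r-1}` satisfied by the Hecke operators
`T_{p^r}`, acting on pairs `(s_{r-1}, s_r)`. -/
def heckeStep (p : ℕ) (c : R) (s : (ℕ → R) × (ℕ → R)) : (ℕ → R) × (ℕ → R) :=
  (s.2, heckeSeq p c s.2 - c • s.1)

lemma heckeStep_injective (hc : IsUnit c) : Function.Injective (heckeStep p c) := by
  rintro ⟨u, v⟩ ⟨u', v'⟩ h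
  obtain ⟨rfl, h⟩ : v = v' ∧ heckeSeq p c v - c • u = heckeSeq p c v' - c • u' :=
    Prod.mk.injEq .. ▸ h
  rw [hc.smul_left_cancel.mp (sub_right_injective h)]

lemma iterate_heckeStep_snd (hp : 0 < p) (a : ℕ → R) (r n : ℕ) :
    ((heckeStep p c)^[r] (0, a)).2 n =
      a (p ^ r * n) + if p ∣ n then c * ((heckeStep p c)^[r] (0, a)).1 (n / p) else 0 := by
  induction r generalizing n with
  | zero => simp
  | succ r ih =>
    have h := ih (p * n)
    rw [if_pos (dvd_mul_right p n), Nat.mul_div_cancel_left n hp, ← mul_assoc, ← pow_succ] at h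
    simp only [Function.iterate_succ_apply', heckeStep, Pi.sub_apply, Pi.smul_apply, smul_eq_mul,
      heckeSeq, h]
    ring

-- The step is a permutation of the finite set `V × V`, so some iterate returns to `(0, a)`.
lemma exists_coeff_pow_mul_eq_zero (hp : 0 < p) (hc : IsUnit c) {V : Submodule R (ℕ → R)}
    [Finite V] (hT : ∀ v ∈ V, heckeSeq p c v ∈ V) {a : ℕ → R} (ha : a ∈ V) :
    ∃ r, ∀ n, ¬ p ∣ n → a (p ^ r * n) = 0 := by
  have hmaps : Set.MapsTo (heckeStep p c) (V ×ˢ V : Set _) (V ×ˢ V : Set _) := fun s hs ↦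
    ⟨hs.2, V.sub_mem (hT _ hs.2) (V.smul_mem c hs.1)⟩
  have : Finite (V ×ˢ V : Set ((ℕ → R) × (ℕ → R))) :=
    (Set.toFinite (V : Set (ℕ → R))).prod (Set.toFinite (V : Set (ℕ → R)))
  obtain ⟨r, hr, hperiodic⟩ := Function.mem_periodicPts.mp <|
    (hmaps.restrict_inj.mpr (heckeStep_injective hc).injOn).mem_periodicPts
      ⟨(0, a), V.zero_mem, ha⟩
  obtain ⟨r, rfl⟩ := Nat.exists_eq_add_one.mpr hr
  have hreturn : (heckeStep p c)^[r + 1] (0, a) = (0, a) := by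
    simpa only [hmaps.iterate_restrict, Set.MapsTo.val_restrict_apply] using
      congrArg Subtype.val hperiodic
  refine ⟨r, fun n hn ↦ ?_⟩
  have hzero : ((heckeStep p c)^[r] (0, a)).2 = 0 := by
    simpa only [Function.iterate_succ_apply', heckeStep] using congrArg Prod.fst hreturn
  simpa [hzero, hn] using (iterate_heckeStep_snd (c := c) hp a r n).symm

end HeckeOnSequences

section IntegerMatrices

variable {A B : Matrix (Fin 2) (Fin 2) ℤ} {x y w : ℤ} {f : ℍ → ℂ} {k : ℤ}

/-- An integer matrix of nonzero determinant as an element of `GL(2, ℝ)`, so that it acts on the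
upper half-plane and on functions; matrices of determinant zero are sent to `1`. -/
noncomputable def intGL (A : Matrix (Fin 2) (Fin 2) ℤ) : GL (Fin 2) ℝ :=
  if h : (A.map (Int.cast : ℤ → ℝ)).det ≠ 0 then GeneralLinearGroup.mkOfDetNeZero _ h else 1

lemma det_map_intCast (A : Matrix (Fin 2) (Fin 2) ℤ) :
    (A.map (Int.cast : ℤ → ℝ)).det = A.det :=
  ((Int.castRingHom ℝ).map_det A).symm

lemma coe_intGL (hA : A.det ≠ 0) : (intGL A : Matrix (Fin 2) (Fin 2) ℝ) = A.map Int.cast := by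
  have hdet : (A.map (Int.cast : ℤ → ℝ)).det ≠ 0 := by rwa [det_map_intCast, Int.cast_ne_zero]
  simp [intGL, hdet, GeneralLinearGroup.mkOfDetNeZero]

lemma det_intGL (hA : A.det ≠ 0) : ((intGL A).det : ℝ) = A.det := by
  rw [GeneralLinearGroup.val_det_apply, coe_intGL hA, det_map_intCast]

lemma intGL_mul (hA : A.det ≠ 0) (hB : B.det ≠ 0) : intGL (A * B) = intGL A * intGL B := by
  have hAB : (A * B).det ≠ 0 := by simp [Matrix.det_mul, hA, hB]
  ext1
  rw [Units.val_mul, coe_intGL hA, coe_intGL hB, coe_intGL hAB]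
  exact Matrix.map_mul (f := Int.castRingHom ℝ)

lemma intGL_coe (γ : SL(2, ℤ)) : intGL γ = (γ : GL (Fin 2) ℝ) := by
  ext i j
  simp [coe_intGL (A := γ) (by simp)]

lemma slash_intGL_slash (f : ℍ → ℂ) (k : ℤ) (hA : A.det ≠ 0) (γ : SL(2, ℤ)) :
    (f ∣[k] intGL A) ∣[k] γ = f ∣[k] intGL (A * γ) := by
  rw [SL_slash, intGL_mul hA (by simp), SlashAction.slash_mul, intGL_coe]

lemma slash_slash_intGL (f : ℍ → ℂ) (k : ℤ) (hA : A.det ≠ 0) (γ : SL(2, ℤ)) :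
    (f ∣[k] γ) ∣[k] intGL A = f ∣[k] intGL (γ * A) := by
  rw [SL_slash, intGL_mul (by simp) hA, SlashAction.slash_mul, intGL_coe]

lemma smul_slash_intGL (f : ℍ → ℂ) (k c : ℤ) (A : Matrix (Fin 2) (Fin 2) ℤ) :
    ((c : ℂ) • f) ∣[k] intGL A = (c : ℂ) • (f ∣[k] intGL A) := by
  rw [smul_slash]
  congr 1
  exact_mod_cast σ_ofReal (intGL A) c

lemma exists_eq_mul_upperTriangular {m : ℤ} (hm : 0 < m) (A : FixedDetMatrix (Fin 2) ℤ m) :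
    ∃ (γ : SL(2, ℤ)) (x y w : ℤ), 0 < x ∧ 0 < w ∧ x * w = m ∧ A.1 = γ * !![x, y; 0, w] := by
  induction A using FixedDetMatrices.induction_on hm.ne' with
  | h0 A hA hx _ _ =>
    have hdet : A.1 0 0 * A.1 1 1 = m := by
      simpa only [Matrix.det_fin_two, hA, mul_zero, sub_zero] using A.2
    refine ⟨1, A.1 0 0, A.1 0 1, A.1 1 1, hx, ?_, hdet, ?_⟩
    · exact pos_of_mul_pos_right (hdet.symm ▸ hm) hx.le
    · simpa [hA] using A.1.eta_fin_two
  | hS A ih =>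
    obtain ⟨γ, x, y, w, hx, hw, hdet, hA⟩ := ih
    exact ⟨ModularGroup.S * γ, x, y, w, hx, hw, hdet,
      (congrArg _ hA).trans (Matrix.mul_assoc ..).symm⟩
  | hT A ih =>
    obtain ⟨γ, x, y, w, hx, hw, hdet, hA⟩ := ih
    exact ⟨ModularGroup.T * γ, x, y, w, hx, hw, hdet,
      (congrArg _ hA).trans (Matrix.mul_assoc ..).symm⟩

lemma det_upperTriangular_ne_zero (hx : 0 < x) (hw : 0 < w) : (!![x, y; 0, w]).det ≠ 0 := by
  simp [hx.ne', hw.ne']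

lemma det_intGL_upperTriangular (hx : 0 < x) (hw : 0 < w) :
    ((intGL !![x, y; 0, w]).det : ℝ) = x * w := by
  simp [det_intGL (det_upperTriangular_ne_zero hx hw)]

lemma coe_upperTriangular_smul (hx : 0 < x) (hw : 0 < w) (τ : ℍ) :
    ((intGL !![x, y; 0, w] • τ : ℍ) : ℂ) = (x * τ + y) / w := by
  have hdet : 0 < (intGL !![x, y; 0, w]).det.val := by
    rw [det_intGL_upperTriangular hx hw]
    positivity
  rw [coe_smul_of_det_pos hdet]
  simp [num, denom, coe_intGL (det_upperTriangular_ne_zero hx hw)]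

lemma im_upperTriangular_smul (hx : 0 < x) (hw : 0 < w) (τ : ℍ) :
    (intGL !![x, y; 0, w] • τ : ℍ).im = x / w * τ.im := by
  rw [← coe_im, coe_upperTriangular_smul hx hw,
    show (x * τ + y : ℂ) / w = ((x / w : ℝ) : ℂ) * τ + ((y / w : ℝ) : ℂ) by push_cast; ring]
  simp

lemma slash_upperTriangular_apply (hx : 0 < x) (hw : 0 < w) (f : ℍ → ℂ) (k : ℤ) (τ : ℍ) :
    (f ∣[k] intGL !![x, y; 0, w]) τ =
      (x * w : ℂ) ^ (k - 1) * (w : ℂ) ^ (-k) * f (intGL !![x, y; 0, w] • τ) := by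
  have hpos : (0 : ℝ) < x * w := by positivity
  rw [slash_apply, det_intGL_upperTriangular hx hw, abs_of_pos hpos]
  simp only [σ, det_intGL_upperTriangular hx hw, hpos, if_true]
  simp [denom, coe_intGL (det_upperTriangular_ne_zero hx hw)]
  ring

end IntegerMatrices

section Growth

variable {f g : ℍ → ℂ} {e e' : ℝ}

/-- Growth of order at most `exp (2π e Im τ)` at `i∞`: a pole of order at most `e` in
`q = exp (2πiτ)`, where the real number `e` may be negative. -/
def HasExpGrowth (f : ℍ → ℂ) (e : ℝ) : Prop :=
  f =O[atImInfty] fun τ ↦ Real.exp (2 * Real.pi * e * τ.im)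

lemma HasExpGrowth.mono (hf : HasExpGrowth f e) (he : e ≤ e') : HasExpGrowth f e' := by
  refine hf.trans (IsBigO.of_norm_le fun τ ↦ ?_)
  rw [Real.norm_of_nonneg (Real.exp_nonneg _)]
  gcongr

lemma HasExpGrowth.add (hf : HasExpGrowth f e) (hg : HasExpGrowth g e) : HasExpGrowth (f + g) e :=
  IsBigO.add hf hg

lemma HasExpGrowth.sum {ι : Type*} {s : Finset ι} {F : ι → ℍ → ℂ}
    (hF : ∀ i ∈ s, HasExpGrowth (F i) e) : HasExpGrowth (∑ i ∈ s, F i) e := by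
  simpa only [HasExpGrowth, Finset.sum_fn] using IsBigO.fun_sum hF

lemma HasExpGrowth.const_smul (hf : HasExpGrowth f e) (c : ℂ) : HasExpGrowth (c • f) e :=
  IsBigO.const_smul_left hf c

lemma HasExpGrowth.mul (hf : HasExpGrowth f e) (hg : HasExpGrowth g e') :
    HasExpGrowth (f * g) (e + e') := by
  refine (IsBigO.mul hf hg).congr_right fun τ ↦ ?_
  rw [← Real.exp_add]
  ring_nf

lemma HasExpGrowth.of_pow {n : ℕ} (hn : n ≠ 0) (hf : HasExpGrowth (f ^ n) (n * e)) :
    HasExpGrowth f e := by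
  refine IsBigO.of_pow hn (IsBigO.congr_right hf fun τ ↦ ?_)
  rw [Pi.pow_apply, ← Real.exp_nat_mul]
  ring_nf

lemma hasExpGrowth_zero_iff : HasExpGrowth f 0 ↔ IsBoundedAtImInfty f := by
  simp only [HasExpGrowth, mul_zero, zero_mul, Real.exp_zero]
  exact ⟨fun h ↦ h, fun h ↦ h⟩

lemma HasExpGrowth.prod {ι : Type*} {s : Finset ι} {F : ι → ℍ → ℂ}
    (hF : ∀ i ∈ s, HasExpGrowth (F i) e) : HasExpGrowth (∏ i ∈ s, F i) (s.card * e) := by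
  classical
  induction s using Finset.induction_on with
  | empty => simpa using hasExpGrowth_zero_iff.mpr (const_boundedAtFilter _ (1 : ℂ))
  | insert i s hi ih =>
    rw [Finset.prod_insert hi, Finset.card_insert_of_notMem hi, Nat.cast_succ, add_one_mul,
      add_comm]
    exact (hF i (s.mem_insert_self i)).mul (ih fun j hj ↦ hF j (Finset.mem_insert_of_mem hj))

lemma HasExpGrowth.isZeroAtImInfty (hf : HasExpGrowth f e) (he : e < 0) : IsZeroAtImInfty f := by
  have htop : Tendsto UpperHalfPlane.im atImInfty atTop := tendsto_comap
  exact hf.trans_tendsto <| Real.tendsto_exp_atBot.comp <|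
    htop.const_mul_atTop_of_neg (mul_neg_of_pos_of_neg Real.two_pi_pos he)

lemma HasExpGrowth.slash_upperTriangular {x y w : ℤ} (hx : 0 < x) (hw : 0 < w)
    (hf : HasExpGrowth f e) (k : ℤ) :
    HasExpGrowth (f ∣[k] intGL !![x, y; 0, w]) (e * (x / w)) := by
  have hcusp : intGL !![x, y; 0, w] 1 0 = 0 := by
    simp [coe_intGL (det_upperTriangular_ne_zero hx hw)]
  refine ((hf.comp_tendsto (tendsto_smul_atImInfty hcusp)).const_mul_left
    ((x * w : ℂ) ^ (k - 1) * (w : ℂ) ^ (-k))).congr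
    (fun τ ↦ (slash_upperTriangular_apply hx hw f k τ).symm) fun τ ↦ ?_
  rw [Function.comp_apply, im_upperTriangular_smul hx hw]
  ring_nf

lemma hasExpGrowth_qParam_zpow (h : ℝ) (n : ℤ) :
    HasExpGrowth (fun τ ↦ qParam h τ ^ n) (-n / h) := by
  refine IsBigO.of_norm_le fun τ ↦ le_of_eq ?_
  rw [norm_zpow, Function.Periodic.norm_qParam, ← Real.rpow_intCast, ← Real.exp_mul, coe_im]
  ring_nf

lemma periodic_comp_ofComplex {h : ℝ} (hper : ∀ τ : ℍ, f (h +ᵥ τ) = f τ) :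
    Function.Periodic (f ∘ ofComplex) (h : ℂ) := by
  intro z
  rcases le_or_gt z.im 0 with hz | hz
  · simp only [Function.comp_apply, ofComplex_apply_of_im_nonpos hz,
      ofComplex_apply_of_im_nonpos (w := z + h) (by simpa using hz)]
  · have hz' : 0 < (z + h).im := by simpa using hz
    rw [Function.comp_apply, Function.comp_apply, ofComplex_apply_of_im_pos hz,
      ofComplex_apply_of_im_pos hz', ← hper ⟨z, hz⟩]
    congr 1
    ext
    simp [add_comm]

lemma qParam_vadd {h : ℝ} (hh : h ≠ 0) (τ : ℍ) :
    qParam h (h +ᵥ τ : ℍ) = qParam h τ := by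
  rw [qParam, qParam, Complex.exp_eq_exp_iff_exists_int]
  refine ⟨1, ?_⟩
  have hh' : (h : ℂ) ≠ 0 := mod_cast hh
  push_cast [coe_vadd]
  field_simp
  ring

lemma mdifferentiable_qParam (h : ℝ) : MDiff fun τ : ℍ ↦ qParam h τ := by
  rw [UpperHalfPlane.mdifferentiable_iff]
  refine (Function.Periodic.differentiable_qParam (h := h)).differentiableOn.congr fun z hz ↦ ?_
  simp [ofComplex_apply_of_im_pos hz]

-- Periodicity forces the order at `i∞` to be a multiple of `1 / h`.
lemma HasExpGrowth.isBoundedAtImInfty_of_lt_inv {h : ℝ} (hh : 0 < h) (hf : HasExpGrowth f e)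
    (he : e < 1 / h) (hmdiff : MDiff f) (hper : ∀ τ : ℍ, f (h +ᵥ τ) = f τ) :
    IsBoundedAtImInfty f := by
  set q : ℍ → ℂ := fun τ ↦ qParam h τ with hq
  have hqgrowth (n : ℤ) : HasExpGrowth (fun τ ↦ q τ ^ n) (-n / h) := hasExpGrowth_qParam_zpow h n
  have hqf_growth : HasExpGrowth (q * f) (e - 1 / h) := by
    convert (hqgrowth 1).mul hf using 1
    · simp
    · push_cast; ring
  have hqf_zero := hqf_growth.isZeroAtImInfty (sub_neg.mpr he)
  have hqf_per : Function.Periodic ((q * f) ∘ ofComplex) (h : ℂ) :=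
    periodic_comp_ofComplex fun τ ↦ by
      rw [Pi.mul_apply, Pi.mul_apply, hper, hq]
      exact congrArg (· * f τ) (qParam_vadd hh.ne' τ)
  have hqf_decay : HasExpGrowth (q * f) (-1 / h) :=
    (hqf_zero.exp_decay_atImInfty hh hqf_per ((mdifferentiable_qParam h).mul hmdiff)
      hqf_zero.isBoundedAtImInfty).congr_right fun τ ↦ by ring_nf
  rw [← hasExpGrowth_zero_iff]
  convert (hqgrowth (-1)).mul hqf_decay using 1
  · ext τ
    simp [hq, qParam_ne_zero]
  · push_cast; ring

end Growth

lemma coe_mul_coe_eq_one_of_mem_Gamma0 {N : ℕ} {γ : SL(2, ℤ)}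
    (hγ : γ ∈ CongruenceSubgroup.Gamma0 N) : ((γ 0 0 : ℤ) : ZMod N) * (γ 1 1 : ℤ) = 1 := by
  have hdet := congrArg (Int.cast : ℤ → ZMod N) γ.det_coe
  rwa [Matrix.det_fin_two, Int.cast_sub, Int.cast_mul, Int.cast_mul,
    CongruenceSubgroup.Gamma0_mem.mp hγ, mul_zero, sub_zero, Int.cast_one] at hdet

lemma discriminant_slash (γ : SL(2, ℤ)) :
    discriminant ∣[(12 : ℤ)] γ = discriminant :=
  SlashInvariantForm.slash_action_generators_SL2Z discriminant_S_invariant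
    discriminant_T_invariant γ

section Forms

variable {N : ℕ} {χ ψ : DirichletCharacter ℤ N} {k l : ℤ} {e e' : ℝ} {f g : ℍ → ℂ}

/-- `f` is a weakly holomorphic modular form of weight `k`, level `Γ₀(N)` and (real) nebentypus
`χ`, with a pole of order at most `e` in `q = exp (2πiτ)` at every cusp. For `e = 0` these are the
holomorphic modular forms. -/
structure IsWeakForm (N : ℕ) (χ : DirichletCharacter ℤ N) (k : ℤ) (e : ℝ) (f : ℍ → ℂ) :
    Prop where
  mdifferentiable : MDiff f
  slash_eq : ∀ γ ∈ CongruenceSubgroup.Gamma0 N, f ∣[k] γ = (χ (γ 1 1) : ℂ) • f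
  growth : ∀ γ : SL(2, ℤ), HasExpGrowth (f ∣[k] γ) e

namespace IsWeakForm

lemma zero : IsWeakForm N χ k e 0 where
  mdifferentiable := mdifferentiable_const
  slash_eq γ _ := by rw [SlashAction.zero_slash, smul_zero]
  growth γ := by
    rw [SlashAction.zero_slash]
    exact isBigO_zero _ _

lemma add (hf : IsWeakForm N χ k e f) (hg : IsWeakForm N χ k e g) : IsWeakForm N χ k e (f + g) where
  mdifferentiable := hf.mdifferentiable.add hg.mdifferentiable
  slash_eq γ hγ := by rw [SlashAction.add_slash, hf.slash_eq γ hγ, hg.slash_eq γ hγ, smul_add]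
  growth γ := by
    rw [SlashAction.add_slash]
    exact (hf.growth γ).add (hg.growth γ)

lemma const_smul (hf : IsWeakForm N χ k e f) (c : ℂ) : IsWeakForm N χ k e (c • f) where
  mdifferentiable := hf.mdifferentiable.const_smul c
  slash_eq γ hγ := by rw [SL_smul_slash, hf.slash_eq γ hγ, smul_comm]
  growth γ := by
    rw [SL_smul_slash]
    exact (hf.growth γ).const_smul c

lemma mul (hf : IsWeakForm N χ k e f) (hg : IsWeakForm N ψ l e' g) :
    IsWeakForm N (χ * ψ) (k + l) (e + e') (f * g) where
  mdifferentiable := hf.mdifferentiable.mul hg.mdifferentiable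
  slash_eq γ hγ := by
    rw [mul_slash_SL2, hf.slash_eq γ hγ, hg.slash_eq γ hγ, smul_mul_smul_comm, MulChar.mul_apply,
      Int.cast_mul]
  growth γ := by
    rw [mul_slash_SL2]
    exact (hf.growth γ).mul (hg.growth γ)

lemma mul_of_trivial (hf : IsWeakForm N χ k e f) (hg : IsWeakForm N 1 l e' g) :
    IsWeakForm N χ (k + l) (e + e') (f * g) :=
  mul_one χ ▸ hf.mul hg

lemma of_slash_eq (hf : MDiff f) (hinv : ∀ γ : SL(2, ℤ), f ∣[k] γ = f) (he : HasExpGrowth f e) :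
    IsWeakForm N 1 k e f where
  mdifferentiable := hf
  slash_eq γ hγ := by
    have hunit : IsUnit ((γ 1 1 : ℤ) : ZMod N) :=
      IsUnit.of_mul_eq_one_right _ (coe_mul_coe_eq_one_of_mem_Gamma0 hγ)
    rw [hinv, MulChar.one_apply hunit, Int.cast_one, one_smul]
  growth γ := (hinv γ).symm ▸ he

lemma one : IsWeakForm N 1 0 0 1 :=
  of_slash_eq mdifferentiable_const is_invariant_one
    (hasExpGrowth_zero_iff.mpr (const_boundedAtFilter _ 1))

lemma discriminant : IsWeakForm N 1 12 (-1) ModularForm.discriminant :=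
  of_slash_eq CuspForm.discriminant.holo' discriminant_slash <| by
    simpa [HasExpGrowth] using
      CuspFormClass.exp_decay_atImInfty (h := 1) CuspForm.discriminant one_pos
        one_mem_strictPeriods_SL

lemma discriminant_inv : IsWeakForm N 1 (-12) 1 ModularForm.discriminant⁻¹ := by
  refine of_slash_eq ?_ (fun γ ↦ ?_) ?_
  · rw [UpperHalfPlane.mdifferentiable_iff]
    exact (UpperHalfPlane.mdifferentiable_iff.mp CuspForm.discriminant.holo').inv
      fun z _ ↦ discriminant_ne_zero _
  · have hdiv := div_slash_SL2 0 12 γ 1 ModularForm.discriminant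
    rwa [is_invariant_one, discriminant_slash, one_div, zero_sub] at hdiv
  · refine (exp_isBigO_discriminant.inv_rev (by simp [Real.exp_ne_zero])).congr_right fun τ ↦ ?_
    rw [← Real.exp_neg]
    ring_nf

lemma pow (hf : IsWeakForm N 1 k e f) (n : ℕ) : IsWeakForm N 1 (n * k) (n * e) (f ^ n) := by
  induction n with
  | zero => simpa using one
  | succ n ih =>
    rw [pow_succ, Nat.cast_succ, Nat.cast_succ, add_one_mul, add_one_mul]
    exact ih.mul_of_trivial hf

lemma mdifferentiable_slash (hf : IsWeakForm N χ k e f) (A : GL (Fin 2) ℝ) : MDiff (f ∣[k] A) :=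
  hf.mdifferentiable.slash k A

lemma slash_eq_of_mem_Gamma1 (hf : IsWeakForm N χ k e f) {γ : SL(2, ℤ)}
    (hγ : γ ∈ CongruenceSubgroup.Gamma1 N) : f ∣[k] γ = f := by
  rw [hf.slash_eq γ (CongruenceSubgroup.Gamma1_in_Gamma0 N hγ),
    ((CongruenceSubgroup.Gamma1_mem N γ).mp hγ).2.1, map_one, Int.cast_one, one_smul]

lemma slash_vadd (hf : IsWeakForm N χ k e f) (γ : SL(2, ℤ)) (τ : ℍ) :
    (f ∣[k] γ) ((N : ℝ) +ᵥ τ) = (f ∣[k] γ) τ := by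
  have hT : γ * ModularGroup.T ^ (N : ℤ) * γ⁻¹ ∈ CongruenceSubgroup.Gamma1 N := by
    have hmem := CongruenceSubgroup.Gamma_mem.mp <| (CongruenceSubgroup.Gamma_normal N).conj_mem _
      (CongruenceSubgroup.ModularGroup_T_pow_mem_Gamma N N dvd_rfl) γ
    exact (CongruenceSubgroup.Gamma1_mem N _).mpr ⟨hmem.1, hmem.2.2.2, hmem.2.2.1⟩
  have hslash : (f ∣[k] γ) ∣[k] (ModularGroup.T ^ (N : ℤ)) = f ∣[k] γ := by
    rw [← SlashAction.slash_mul, ← inv_mul_cancel_right (γ * ModularGroup.T ^ (N : ℤ)) γ,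
      SlashAction.slash_mul, hf.slash_eq_of_mem_Gamma1 hT]
  have happly := congrFun hslash τ
  rw [SL_slash_apply (f ∣[k] γ), modular_T_zpow_smul, ModularGroup.denom_apply,
    ModularGroup.coe_T_zpow] at happly
  simpa using happly

lemma of_lt_inv [NeZero N] (hf : IsWeakForm N χ k e f) (he : e < 1 / N) :
    IsWeakForm N χ k 0 f where
  mdifferentiable := hf.mdifferentiable
  slash_eq := hf.slash_eq
  growth γ := hasExpGrowth_zero_iff.mpr <|
    (hf.growth γ).isBoundedAtImInfty_of_lt_inv (Nat.cast_pos.mpr (NeZero.pos N)) he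
      (hf.mdifferentiable_slash γ) (hf.slash_vadd γ)

/-- A weak form bounded at all cusps, as a modular form for `Γ₁(N)`. -/
def toModularForm [NeZero N] (hf : IsWeakForm N χ k 0 f) :
    ModularForm ((CongruenceSubgroup.Gamma1 N).map (mapGL ℝ)) k where
  toFun := f
  slash_action_eq' := by
    rintro _ ⟨γ, hγ, rfl⟩
    exact hf.slash_eq_of_mem_Gamma1 hγ
  holo' := hf.mdifferentiable
  bdd_at_cusps' {c} hc := by
    rw [Subgroup.IsArithmetic.isCusp_iff_isCusp_SL2Z] at hc
    rw [OnePoint.isBoundedAt_iff_forall_SL2Z hc]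
    exact fun γ _ ↦ hasExpGrowth_zero_iff.mp (hf.growth γ)

lemma coe_toModularForm [NeZero N] (hf : IsWeakForm N χ k 0 f) : ⇑hf.toModularForm = f := rfl

lemma eq_zero_of_neg_weight [NeZero N] (hf : IsWeakForm N χ k 0 f) (hk : k < 0) : f = 0 :=
  congrArg DFunLike.coe (ModularForm.isZero_of_neg_weight hk hf.toModularForm)

lemma hasExpGrowth_quotientFunc [NeZero N] (hf : IsWeakForm N χ k 0 f)
    (q : 𝒮ℒ ⧸ ((CongruenceSubgroup.Gamma1 N).map (mapGL ℝ)).subgroupOf 𝒮ℒ) :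
    HasExpGrowth (SlashInvariantForm.quotientFunc hf.toModularForm q) 0 := by
  induction q using Quotient.inductionOn with
  | h r =>
    obtain ⟨γ, hγ⟩ := r.2
    have hslash : SlashInvariantForm.quotientFunc hf.toModularForm ⟦r⟧ = f ∣[k] γ⁻¹ := by
      rw [SlashInvariantForm.quotientFunc_mk, SL_slash, ← hγ, ← map_inv]
      rfl
    exact hslash ▸ hf.growth γ⁻¹

lemma hasExpGrowth_norm [NeZero N] (hf : IsWeakForm N χ k 0 f) (hgrowth : HasExpGrowth f e) :
    HasExpGrowth (ModularForm.norm 𝒮ℒ hf.toModularForm) e := by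
  classical
  let := Fintype.ofFinite (𝒮ℒ ⧸ ((CongruenceSubgroup.Gamma1 N).map (mapGL ℝ)).subgroupOf 𝒮ℒ)
  have hone : SlashInvariantForm.quotientFunc hf.toModularForm ⟦(1 : 𝒮ℒ)⟧ = f := by
    rw [SlashInvariantForm.quotientFunc_mk, OneMemClass.coe_one, inv_one, SlashAction.slash_one,
      coe_toModularForm]
  have hsplit := Finset.mul_prod_erase Finset.univ
    (fun q ↦ SlashInvariantForm.quotientFunc hf.toModularForm q) (Finset.mem_univ ⟦(1 : 𝒮ℒ)⟧)
  rw [ModularForm.coe_norm, ← hsplit, hone]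
  simpa using hgrowth.mul (HasExpGrowth.prod fun q _ ↦ hf.hasExpGrowth_quotientFunc q)

-- The norm of `f` to level one, divided by `Δ ^ M`, is a holomorphic form of negative weight.
lemma eq_zero_of_growth [NeZero N] (hf : IsWeakForm N χ k 0 f) {M : ℕ}
    (hgrowth : HasExpGrowth f (-M))
    (hM : k * ((CongruenceSubgroup.Gamma1 N).map (mapGL ℝ)).relIndex 𝒮ℒ < 12 * M) : f = 0 := by
  set F := ModularForm.norm 𝒮ℒ hf.toModularForm
  have hFform : IsWeakForm 1 1 (k * ((CongruenceSubgroup.Gamma1 N).map (mapGL ℝ)).relIndex 𝒮ℒ)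
      (-M) F :=
    of_slash_eq F.holo' (fun γ ↦ SlashInvariantForm.slash_action_eqn F _ ⟨γ, rfl⟩)
      (hf.hasExpGrowth_norm hgrowth)
  have hquot := hFform.mul_of_trivial (discriminant_inv.pow M)
  rw [mul_one, neg_add_cancel] at hquot
  have hquot_zero := hquot.eq_zero_of_neg_weight (by linarith)
  have hFzero : F = 0 := by
    ext τ
    simpa [discriminant_ne_zero] using congrFun hquot_zero τ
  exact (ModularForm.norm_eq_zero_iff 𝒮ℒ hf.toModularForm).mp hFzero

end IsWeakForm

end Forms

section HeckeOperators

variable {N p : ℕ} {χ : DirichletCharacter ℤ N} {k : ℤ} {e : ℝ} {f : ℍ → ℂ}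

/-- Representatives of `SL(2, ℤ)` acting on the left on integer matrices of prime determinant `p`,
indexed by the projective line over `𝔽_p`. -/
def heckeRep (p : ℕ) : Option (ZMod p) → Matrix (Fin 2) (Fin 2) ℤ
  | some j => !![1, j.val; 0, p]
  | none => !![p, 0; 0, 1]

lemma det_heckeRep (i : Option (ZMod p)) : (heckeRep p i).det = p := by
  cases i <;> simp [heckeRep, Matrix.det_fin_two]

lemma heckeRep_one_zero (i : Option (ZMod p)) : heckeRep p i 1 0 = 0 := by
  cases i <;> rfl

lemma det_heckeRep_mul (i : Option (ZMod p)) (γ : SL(2, ℤ)) : (heckeRep p i * γ).det = p := by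
  rw [Matrix.det_mul, det_heckeRep, γ.det_coe, mul_one]

lemma eq_of_heckeRep_eq_mul [Fact p.Prime] {i j : Option (ZMod p)} {δ : SL(2, ℤ)}
    (h : heckeRep p i = δ * heckeRep p j) : i = j := by
  have hp : ¬ IsUnit (p : ℤ) := (Nat.prime_iff_prime_int.mp Fact.out).not_isUnit
  have hentry (r s : Fin 2) :
      heckeRep p i r s = δ r 0 * heckeRep p j 0 s + δ r 1 * heckeRep p j 1 s := by
    rw [h, Matrix.mul_apply, Fin.sum_univ_two]
  match i, j with
  | none, none => rfl
  | none, some b =>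
    have h10 : δ 1 0 = 0 := by simpa [heckeRep, eq_comm] using hentry 1 0
    have h11 : δ 1 1 * p = 1 := by simpa [heckeRep, h10, eq_comm] using hentry 1 1
    exact absurd (IsUnit.of_mul_eq_one_right _ h11) hp
  | some a, none =>
    have h00 : δ 0 0 * p = 1 := by simpa [heckeRep, eq_comm] using hentry 0 0
    exact absurd (IsUnit.of_mul_eq_one_right _ h00) hp
  | some a, some b =>
    have h00 : δ 0 0 = 1 := by simpa [heckeRep, eq_comm] using hentry 0 0
    have h01 : (a.val : ℤ) = b.val + δ 0 1 * p := by simpa [heckeRep, h00] using hentry 0 1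
    simpa using congrArg (Int.cast : ℤ → ZMod p) h01

lemma exists_upperTriangular_eq_mul_heckeRep [Fact p.Prime] {x y w : ℤ} (hx : 0 < x)
    (hw : 0 < w) (hxw : x * w = p) :
    ∃ (n : ℤ) (i : Option (ZMod p)),
      !![x, y; 0, w] =
        ((ModularGroup.T ^ n : SL(2, ℤ)) : Matrix (Fin 2) (Fin 2) ℤ) * heckeRep p i := by
  have hp : Prime (p : ℤ) := Nat.prime_iff_prime_int.mp Fact.out
  rcases hp.irreducible.isUnit_or_isUnit hxw.symm with hunit | hunit
  · obtain rfl : x = 1 := (Int.isUnit_iff.mp hunit).resolve_right (by lia)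
    obtain rfl : w = p := by lia
    refine ⟨y / p, some y, ?_⟩
    rw [ModularGroup.coe_T_zpow, heckeRep, ZMod.val_intCast]
    simp [Int.emod_add_mul_ediv, mul_comm (y / p)]
  · obtain rfl : w = 1 := (Int.isUnit_iff.mp hunit).resolve_right (by lia)
    obtain rfl : x = p := by lia
    exact ⟨y, none, by simp [ModularGroup.coe_T_zpow, heckeRep]⟩

lemma exists_eq_mul_heckeRep [Fact p.Prime] (hpN : p.Coprime N) {A : Matrix (Fin 2) (Fin 2) ℤ}
    (hdet : A.det = p) (hA : (A 1 0 : ZMod N) = 0) :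
    ∃ δ ∈ CongruenceSubgroup.Gamma0 N, ∃ i, A = δ * heckeRep p i := by
  obtain ⟨γ, x, y, w, hx, hw, hxw, hγ⟩ :=
    exists_eq_mul_upperTriangular (Nat.cast_pos.mpr (NeZero.pos p)) ⟨A, hdet⟩
  obtain ⟨n, i, hn⟩ := exists_upperTriangular_eq_mul_heckeRep (y := y) hx hw hxw
  replace hγ : A = γ * !![x, y; 0, w] := hγ
  have hx_unit : IsUnit (x : ZMod N) := by
    have hp_unit : IsUnit ((x : ZMod N) * w) := by
      rw [← Int.cast_mul, hxw, Int.cast_natCast]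
      exact (ZMod.isUnit_iff_coprime p N).mpr hpN
    exact isUnit_of_mul_isUnit_left hp_unit
  have hγ10 : (γ 1 0 : ZMod N) = 0 := by
    refine hx_unit.mul_left_eq_zero.mp ?_
    simpa [hγ, Matrix.mul_apply, Fin.sum_univ_two] using hA
  refine ⟨γ * ModularGroup.T ^ n, ?_, i, ?_⟩
  · simp [CongruenceSubgroup.Gamma0_mem, ModularGroup.coe_T_zpow, Matrix.mul_apply,
      Fin.sum_univ_two, hγ10]
  · rw [hγ, hn, ← Matrix.mul_assoc, ← Matrix.SpecialLinearGroup.coe_mul]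

/-- The summand attached to the matrix `A` in the Hecke operator `T_p`. -/
noncomputable def heckeTerm (χ : DirichletCharacter ℤ N) (k : ℤ) (f : ℍ → ℂ)
    (A : Matrix (Fin 2) (Fin 2) ℤ) : ℍ → ℂ :=
  (χ (A 0 0) : ℂ) • f ∣[k] intGL A

lemma IsWeakForm.heckeTerm_mul (hf : IsWeakForm N χ k e f) {δ : SL(2, ℤ)}
    (hδ : δ ∈ CongruenceSubgroup.Gamma0 N) {A : Matrix (Fin 2) (Fin 2) ℤ} (hdet : A.det ≠ 0)
    (hA : (A 1 0 : ZMod N) = 0) : heckeTerm χ k f (δ * A) = heckeTerm χ k f A := by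
  have hentry : (((δ * A : Matrix (Fin 2) (Fin 2) ℤ) 0 0 : ℤ) : ZMod N) = δ 0 0 * A 0 0 := by
    simp [Matrix.mul_apply, Fin.sum_univ_two, hA]
  have hχ : χ (δ 0 0) * χ (δ 1 1) = 1 := by
    rw [← map_mul, coe_mul_coe_eq_one_of_mem_Gamma0 hδ, map_one]
  rw [heckeTerm, heckeTerm, ← slash_slash_intGL f k hdet, hf.slash_eq δ hδ, smul_slash_intGL,
    smul_smul, hentry, map_mul, ← Int.cast_mul, mul_right_comm, hχ, one_mul]

/-- The Hecke operator `T_p` on forms of weight `k` and nebentypus `χ`. -/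
noncomputable def heckeOp (χ : DirichletCharacter ℤ N) (k : ℤ) (p : ℕ) [NeZero p] (f : ℍ → ℂ) :
    ℍ → ℂ :=
  ∑ i, heckeTerm χ k f (heckeRep p i)

lemma heckeTerm_slash [NeZero p] (i : Option (ZMod p)) (γ : SL(2, ℤ)) :
    heckeTerm χ k f (heckeRep p i) ∣[k] γ =
      (χ (heckeRep p i 0 0) : ℂ) • f ∣[k] intGL (heckeRep p i * γ) := by
  have hdet : (heckeRep p i).det ≠ 0 := by
    rw [det_heckeRep]
    exact_mod_cast NeZero.ne p
  rw [heckeTerm, SL_smul_slash, slash_intGL_slash f k hdet]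

lemma heckeTerm_slash_of_mem_Gamma0 [NeZero p] (i : Option (ZMod p)) {γ : SL(2, ℤ)}
    (hγ : γ ∈ CongruenceSubgroup.Gamma0 N) :
    heckeTerm χ k f (heckeRep p i) ∣[k] γ =
      (χ (γ 1 1) : ℂ) • heckeTerm χ k f (heckeRep p i * γ) := by
  have hentry : (((heckeRep p i * γ : Matrix (Fin 2) (Fin 2) ℤ) 0 0 : ℤ) : ZMod N) =
      heckeRep p i 0 0 * γ 0 0 := by
    simp [Matrix.mul_apply, Fin.sum_univ_two, CongruenceSubgroup.Gamma0_mem.mp hγ]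
  have hχ : χ (γ 0 0) * χ (γ 1 1) = 1 := by
    rw [← map_mul, coe_mul_coe_eq_one_of_mem_Gamma0 hγ, map_one]
  rw [heckeTerm_slash, heckeTerm, smul_smul, hentry, map_mul, ← Int.cast_mul, mul_left_comm,
    mul_comm (χ (γ 1 1)), hχ, mul_one]

lemma IsWeakForm.hasExpGrowth_slash_intGL (hf : IsWeakForm N χ k e f) (he : e ≤ 0) (hp : 0 < p)
    {A : Matrix (Fin 2) (Fin 2) ℤ} (hA : A.det = p) :
    HasExpGrowth (f ∣[k] intGL A) (e / p) := by
  obtain ⟨γ, x, y, w, hx, hw, hxw, rfl⟩ :=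
    exists_eq_mul_upperTriangular (Nat.cast_pos.mpr hp) ⟨A, hA⟩
  rw [← slash_slash_intGL f k (det_upperTriangular_ne_zero hx hw)]
  refine ((hf.growth γ).slash_upperTriangular hx hw k).mono ?_
  have hxw' : (x * w : ℝ) = p := by exact_mod_cast hxw
  have hx' : (1 : ℝ) ≤ x := by exact_mod_cast hx
  have hw' : (0 : ℝ) < w := by exact_mod_cast hw
  have hle : (p : ℝ)⁻¹ ≤ x / w := by
    rw [← hxw', mul_inv, div_eq_mul_inv]
    exact mul_le_mul_of_nonneg_right ((inv_le_one_of_one_le₀ hx').trans hx') (inv_nonneg.mpr hw'.le)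
  rw [div_eq_mul_inv e]
  exact mul_le_mul_of_nonpos_left hle he

section

variable [Fact p.Prime]

lemma IsWeakForm.heckeOp_slash (hf : IsWeakForm N χ k e f) (hpN : p.Coprime N) {γ : SL(2, ℤ)}
    (hγ : γ ∈ CongruenceSubgroup.Gamma0 N) :
    heckeOp χ k p f ∣[k] γ = (χ (γ 1 1) : ℂ) • heckeOp χ k p f := by
  have hentry (i : Option (ZMod p)) :
      (((heckeRep p i * γ : Matrix (Fin 2) (Fin 2) ℤ) 1 0 : ℤ) : ZMod N) = 0 := by
    simp [Matrix.mul_apply, Fin.sum_univ_two, heckeRep_one_zero,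
      CongruenceSubgroup.Gamma0_mem.mp hγ]
  choose δ hδ σ hσ using fun i ↦
    exists_eq_mul_heckeRep hpN (det_heckeRep_mul (p := p) i γ) (hentry i)
  have hσ_inj : Function.Injective σ := by
    intro i j hij
    refine eq_of_heckeRep_eq_mul (δ := δ i * (δ j)⁻¹) ?_
    calc heckeRep p i
        = heckeRep p i * (γ * γ⁻¹ : SL(2, ℤ)) := by simp
      _ = δ i * heckeRep p (σ j) * (γ⁻¹ : SL(2, ℤ)) := by
          rw [Matrix.SpecialLinearGroup.coe_mul, ← Matrix.mul_assoc, hσ, hij]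
      _ = (δ i * (δ j)⁻¹ : SL(2, ℤ)) * (δ j * heckeRep p (σ j)) * (γ⁻¹ : SL(2, ℤ)) := by
          rw [← Matrix.mul_assoc, ← Matrix.SpecialLinearGroup.coe_mul, inv_mul_cancel_right]
      _ = (δ i * (δ j)⁻¹ : SL(2, ℤ)) * heckeRep p j := by
          rw [← hσ, Matrix.mul_assoc, Matrix.mul_assoc, ← Matrix.SpecialLinearGroup.coe_mul,
            mul_inv_cancel, Matrix.SpecialLinearGroup.coe_one, Matrix.mul_one]
  have hdet (i : Option (ZMod p)) : (heckeRep p i).det ≠ 0 := by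
    rw [det_heckeRep]
    exact_mod_cast NeZero.ne p
  calc heckeOp χ k p f ∣[k] γ
      = ∑ i, (χ (γ 1 1) : ℂ) • heckeTerm χ k f (heckeRep p i * γ) := by
        rw [heckeOp, SlashAction.sum_slash]
        exact Finset.sum_congr rfl fun i _ ↦ heckeTerm_slash_of_mem_Gamma0 i hγ
    _ = ∑ i, (χ (γ 1 1) : ℂ) • heckeTerm χ k f (heckeRep p (σ i)) :=
        Finset.sum_congr rfl fun i _ ↦ by
          rw [hσ, hf.heckeTerm_mul (hδ i) (hdet _) (by simp [heckeRep_one_zero])]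
    _ = (χ (γ 1 1) : ℂ) • heckeOp χ k p f := by
        rw [← Finset.smul_sum, heckeOp]
        congr 1
        exact Function.Bijective.sum_comp (Finite.injective_iff_bijective.mp hσ_inj)
          fun i ↦ heckeTerm χ k f (heckeRep p i)

lemma IsWeakForm.heckeOp (hf : IsWeakForm N χ k e f) (he : e ≤ 0) (hpN : p.Coprime N) :
    IsWeakForm N χ k (e / p) (heckeOp χ k p f) where
  mdifferentiable := by
    refine MDifferentiable.sum fun i _ ↦ ?_
    exact (hf.mdifferentiable_slash _).const_smul _
  slash_eq γ hγ := hf.heckeOp_slash hpN hγ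
  growth γ := by
    rw [RegularPartition.heckeOp, SlashAction.sum_slash]
    refine HasExpGrowth.sum fun i _ ↦ ?_
    rw [heckeTerm_slash]
    exact (hf.hasExpGrowth_slash_intGL he (NeZero.pos p) (det_heckeRep_mul i γ)).const_smul _

end

end HeckeOperators

section QExpansions

variable {R : Type*} [CommRing R] [Algebra R ℂ] {f g : ℍ → ℂ} {A B : R⟦X⟧}

/-- `f(τ) = ∑ aₙ qⁿ`, where `q = exp (2πiτ)` and the coefficients `aₙ` of `A` lie in the ring `R`;
the case of interest is `R = ℤ`. -/
def HasQExpansion (f : ℍ → ℂ) (A : R⟦X⟧) : Prop :=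
  ∀ τ : ℍ, HasSum (fun n ↦ algebraMap R ℂ (PowerSeries.coeff n A) * qParam 1 τ ^ n) (f τ)

namespace HasQExpansion

lemma map_algebraMap_iff :
    HasQExpansion f (A.map (algebraMap R ℂ)) ↔ HasQExpansion f A := by
  simp [HasQExpansion]

lemma monomial (n : ℕ) (c : R) :
    HasQExpansion (fun τ : ℍ ↦ algebraMap R ℂ c * qParam 1 τ ^ n) (PowerSeries.monomial n c) :=
  fun τ ↦ by
  refine (hasSum_ite_eq n (algebraMap R ℂ c * qParam 1 τ ^ n)).congr_fun fun m ↦ ?_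
  rw [PowerSeries.coeff_monomial]
  split_ifs with h <;> simp [h]

lemma C (c : R) : HasQExpansion (fun _ ↦ algebraMap R ℂ c) (PowerSeries.C c) := by
  simpa using monomial 0 c

lemma X_pow (n : ℕ) : HasQExpansion (fun τ : ℍ ↦ qParam 1 τ ^ n) (PowerSeries.X ^ n : R⟦X⟧) := by
  simpa [PowerSeries.X_pow_eq] using monomial n (1 : R)

lemma one : HasQExpansion 1 (1 : R⟦X⟧) := by
  simpa [Pi.one_def] using X_pow (R := R) 0

lemma add (hf : HasQExpansion f A) (hg : HasQExpansion g B) : HasQExpansion (f + g) (A + B) :=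
  fun τ ↦ by simpa [add_mul] using (hf τ).add (hg τ)

lemma mul (hf : HasQExpansion f A) (hg : HasQExpansion g B) : HasQExpansion (f * g) (A * B) := by
  intro τ
  have hf_norm := (hf τ).summable.norm
  have hg_norm := (hg τ).summable.norm
  have hsum := (summable_norm_sum_mul_antidiagonal_of_summable_norm hf_norm hg_norm).of_norm.hasSum
  rw [← tsum_mul_tsum_eq_tsum_sum_antidiagonal_of_summable_norm hf_norm hg_norm,
    (hf τ).tsum_eq, (hg τ).tsum_eq] at hsum
  refine hsum.congr_fun fun n ↦ ?_
  rw [PowerSeries.coeff_mul, map_sum, Finset.sum_mul]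
  refine Finset.sum_congr rfl fun x hx ↦ ?_
  rw [← Finset.HasAntidiagonal.mem_antidiagonal.mp hx, pow_add, map_mul]
  ring

lemma pow (hf : HasQExpansion f A) (n : ℕ) : HasQExpansion (f ^ n) (A ^ n) := by
  induction n with
  | zero => simpa using one
  | succ n ih =>
    rw [pow_succ, pow_succ]
    exact ih.mul hf

lemma apply_one_vadd (hf : HasQExpansion f A) (τ : ℍ) : f ((1 : ℝ) +ᵥ τ) = f τ :=
  (hf _).unique (qParam_vadd one_ne_zero τ ▸ hf τ)

lemma isBoundedAtImInfty (hf : HasQExpansion f A) : IsBoundedAtImInfty f :=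
  isBoundedAtImInfty_of_hasSum_qExpansion one_pos hf

lemma of_X_pow_mul {n : ℕ} (hf : HasQExpansion f (PowerSeries.X ^ n * A)) :
    HasQExpansion (fun τ : ℍ ↦ qParam 1 τ ^ (-n : ℤ) * f τ) A := by
  intro τ
  have hsum :
      HasSum (fun j ↦ algebraMap R ℂ (PowerSeries.coeff j A) * qParam 1 τ ^ (j + n)) (f τ) := by
    refine (((add_left_injective n).hasSum_iff fun j hj ↦ ?_).mpr (hf τ)).congr_fun fun j ↦ ?_
    · have hlt : ¬ n ≤ j := fun hle ↦ hj ⟨j - n, Nat.sub_add_cancel hle⟩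
      simp [PowerSeries.coeff_X_pow_mul', hlt]
    · simp [PowerSeries.coeff_X_pow_mul']
  refine (hsum.mul_left (qParam 1 τ ^ (-n : ℤ))).congr_fun fun j ↦ ?_
  have hq := qParam_ne_zero (h := 1) (τ : ℂ)
  rw [_root_.zpow_neg, zpow_natCast, pow_add]
  field_simp

lemma hasExpGrowth {n : ℕ} (hf : HasQExpansion f A) (hA : PowerSeries.X ^ n ∣ A) :
    HasExpGrowth f (-n) := by
  obtain ⟨B, rfl⟩ := hA
  have hbound := hasExpGrowth_zero_iff.mpr hf.of_X_pow_mul.isBoundedAtImInfty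
  convert (hasExpGrowth_qParam_zpow 1 n).mul hbound using 1
  · ext τ
    simp [qParam_ne_zero]
  · simp

lemma eq_zero [FaithfulSMul R ℂ] (hA : HasQExpansion 0 A) : A = 0 := by
  ext n
  have han : AnalyticAt ℂ (cuspFunction 1 (0 : ℍ → ℂ)) 0 :=
    analyticAt_cuspFunction_zero one_pos (fun _ ↦ rfl) mdifferentiable_const
      (const_boundedAtFilter _ 0)
  have hcoeff := @qExpansion_coeff_unique (ℍ → ℂ) ⟨id, Function.injective_id⟩ 1 0
    (fun n ↦ algebraMap R ℂ (PowerSeries.coeff n A)) one_pos han hA n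
  simpa [qExpansion_zero] using hcoeff

lemma unique [FaithfulSMul R ℂ] (hA : HasQExpansion f A) (hB : HasQExpansion f B) : A = B := by
  have hdiff := hA.add ((C (-1)).mul hB)
  have hzero : f + (fun _ ↦ algebraMap R ℂ (-1)) * f = 0 := by
    ext τ
    simp
  rw [hzero] at hdiff
  simpa [add_neg_eq_zero] using hdiff.eq_zero

lemma tendsto_atImInfty (hf : HasQExpansion f A) :
    Tendsto f atImInfty (nhds (algebraMap R ℂ (PowerSeries.constantCoeff A))) := by
  have hdiff := hf.add (C (-PowerSeries.constantCoeff A))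
  have hdvd : PowerSeries.X ^ 1 ∣ A + PowerSeries.C (-PowerSeries.constantCoeff A) := by
    simp [PowerSeries.X_dvd_iff]
  have hzero := (hdiff.hasExpGrowth hdvd).isZeroAtImInfty (by norm_num)
  simpa [add_assoc] using
    (hzero : Tendsto _ _ _).add_const (algebraMap R ℂ (PowerSeries.constantCoeff A))

lemma inv (hf : HasQExpansion f A) (hmd : MDiff f) (hne : ∀ τ, f τ ≠ 0) (hAB : A * B = 1) :
    HasQExpansion f⁻¹ B := by
  have hconst : algebraMap R ℂ (PowerSeries.constantCoeff A) ≠ 0 := by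
    intro h
    simpa [h] using congrArg (algebraMap R ℂ ∘ PowerSeries.constantCoeff) hAB
  have hbdd : IsBoundedAtImInfty f⁻¹ := (hf.tendsto_atImInfty.inv₀ hconst).isBigO_one ℝ
  have hmd_inv : MDiff f⁻¹ := by
    rw [UpperHalfPlane.mdifferentiable_iff] at hmd ⊢
    exact hmd.inv fun z _ ↦ hne _
  have hper : Function.Periodic (f⁻¹ ∘ ofComplex) ((1 : ℝ) : ℂ) :=
    periodic_comp_ofComplex fun τ ↦ by rw [Pi.inv_apply, Pi.inv_apply, hf.apply_one_vadd]
  have hC : HasQExpansion f⁻¹ (qExpansion 1 f⁻¹) :=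
    UpperHalfPlane.hasSum_qExpansion one_pos hper hmd_inv hbdd
  have hone : f * f⁻¹ = 1 := funext fun τ ↦ mul_inv_cancel₀ (hne τ)
  have hCA := hone ▸ (map_algebraMap_iff.mpr hf).mul hC
  have hBA : A.map (algebraMap R ℂ) * B.map (algebraMap R ℂ) = 1 := by rw [← map_mul, hAB, map_one]
  rw [mul_comm] at hCA
  rwa [left_inv_eq_right_inv (hCA.unique one) hBA, map_algebraMap_iff] at hC

end HasQExpansion

end QExpansions

section HeckeExpansions

variable {R : Type*} [CommRing R]

/-- The operator `U_p : ∑ aₙ Xⁿ ↦ ∑ a_{pn} Xⁿ`. -/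
noncomputable def decimate (p : ℕ) : R⟦X⟧ →ₗ[R] R⟦X⟧ where
  toFun A := PowerSeries.mk fun n ↦ PowerSeries.coeff (p * n) A
  map_add' _ _ := by ext; simp
  map_smul' _ _ := by ext; simp

@[simp]
lemma coeff_decimate (p n : ℕ) (A : R⟦X⟧) :
    PowerSeries.coeff n (decimate p A) = PowerSeries.coeff (p * n) A :=
  PowerSeries.coeff_mk n fun n ↦ PowerSeries.coeff (p * n) A

/-- The effect of a Hecke operator on `q`-expansions, `U_p + c V_p`. -/
noncomputable def heckeSeries (p : ℕ) [NeZero p] (c : R) (A : R⟦X⟧) : R⟦X⟧ :=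
  decimate p A + PowerSeries.C c * PowerSeries.expand p (NeZero.ne p) A

lemma coeff_heckeSeries (p : ℕ) [NeZero p] (c : R) (A : R⟦X⟧) (n : ℕ) :
    PowerSeries.coeff n (heckeSeries p c A) =
      heckeSeq p c (fun j ↦ PowerSeries.coeff j A) n := by
  simp [heckeSeries, heckeSeq, PowerSeries.coeff_expand]

/-- The function `f(nτ)`, for `n > 0`. -/
noncomputable def dilate (n : ℕ) (f : ℍ → ℂ) (τ : ℍ) : ℂ :=
  f (intGL !![(n : ℤ), 0; 0, 1] • τ)

variable [Algebra R ℂ] {f : ℍ → ℂ} {A : R⟦X⟧}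

lemma coe_dilation_smul {n : ℕ} (hn : n ≠ 0) (τ : ℍ) :
    ((intGL !![(n : ℤ), 0; 0, 1] • τ : ℍ) : ℂ) = n * τ := by
  simpa using coe_upperTriangular_smul (y := 0) (Int.natCast_pos.mpr (Nat.pos_of_ne_zero hn))
    one_pos τ

lemma HasQExpansion.dilate (hf : HasQExpansion f A) {n : ℕ} (hn : n ≠ 0) :
    HasQExpansion (dilate n f) (PowerSeries.expand n hn A) := by
  intro τ
  have hq : qParam 1 (intGL !![(n : ℤ), 0; 0, 1] • τ : ℍ) = qParam 1 τ ^ n := by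
    rw [coe_dilation_smul hn, qParam, qParam, ← Complex.exp_nat_mul]
    congr 1
    ring
  have hsum := hf (intGL !![(n : ℤ), 0; 0, 1] • τ)
  rw [hq] at hsum
  rw [← (mul_right_injective₀ hn).hasSum_iff]
  · refine hsum.congr_fun fun j ↦ ?_
    simp [PowerSeries.coeff_expand, pow_mul, Nat.mul_div_cancel_left j (Nat.pos_of_ne_zero hn)]
  · intro j hj
    have hndvd : ¬ n ∣ j := fun ⟨i, hi⟩ ↦ hj ⟨i, hi.symm⟩
    simp [PowerSeries.coeff_expand, hndvd]

variable {p : ℕ} [Fact p.Prime]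

lemma sum_rootOfUnity_pow {ζ : ℂ} (hζ : IsPrimitiveRoot ζ p) (n : ℕ) :
    ∑ j : ZMod p, (ζ ^ j.val) ^ n = if p ∣ n then (p : ℂ) else 0 := by
  have hrange : ∑ j : ZMod p, (ζ ^ j.val) ^ n = ∑ i ∈ Finset.range p, (ζ ^ n) ^ i := by
    simp_rw [← pow_mul, mul_comm n]
    refine Finset.sum_bij (fun j _ ↦ j.val) (fun j _ ↦ Finset.mem_range.mpr j.val_lt)
      (fun _ _ _ _ h ↦ ZMod.val_injective p h) (fun i hi ↦ ⟨i, Finset.mem_univ _, ?_⟩)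
      (fun _ _ ↦ rfl)
    exact ZMod.val_natCast_of_lt (Finset.mem_range.mp hi)
  rw [hrange]
  split_ifs with h
  · simp [(hζ.pow_eq_one_iff_dvd n).mpr h]
  · exact (hζ.pow_of_coprime n ((Nat.Prime.coprime_iff_not_dvd Fact.out).mpr h).symm)
      |>.geom_sum_eq_zero (Fact.out : p.Prime).one_lt

lemma HasQExpansion.decimate (hf : HasQExpansion f A) :
    HasQExpansion (fun τ ↦ (p : ℂ)⁻¹ * ∑ j : ZMod p, f (intGL !![1, (j.val : ℤ); 0, p] • τ))
      (decimate p A) := by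
  intro τ
  have hp : (p : ℂ) ≠ 0 := Nat.cast_ne_zero.mpr (NeZero.ne p)
  set ζ : ℂ := Complex.exp (2 * Real.pi * Complex.I / p)
  have hζ : IsPrimitiveRoot ζ p := Complex.isPrimitiveRoot_exp p (NeZero.ne p)
  have hq (j : ZMod p) : qParam 1 (intGL !![1, (j.val : ℤ); 0, p] • τ : ℍ) =
      ζ ^ j.val * qParam p τ := by
    rw [coe_upperTriangular_smul one_pos (Int.natCast_pos.mpr (NeZero.pos p)), qParam, qParam,
      ← Complex.exp_nat_mul, ← Complex.exp_add]
    congr 1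
    push_cast
    field_simp
    ring
  have hqp : qParam p τ ^ p = qParam 1 τ := by
    rw [qParam, qParam, ← Complex.exp_nat_mul]
    congr 1
    push_cast
    field_simp
  have hsum := (hasSum_sum (s := Finset.univ) fun (j : ZMod p) _ ↦
    hf (intGL !![1, (j.val : ℤ); 0, p] • τ)).mul_left (p : ℂ)⁻¹
  have hterm (n : ℕ) : (p : ℂ)⁻¹ * ∑ j : ZMod p, algebraMap R ℂ (PowerSeries.coeff n A) *
        qParam 1 (intGL !![1, (j.val : ℤ); 0, p] • τ : ℍ) ^ n =
      if p ∣ n then algebraMap R ℂ (PowerSeries.coeff n A) * qParam p τ ^ n else 0 := by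
    simp_rw [hq, mul_pow, mul_left_comm (algebraMap R ℂ _), ← Finset.sum_mul,
      sum_rootOfUnity_pow hζ]
    split_ifs
    · rw [inv_mul_cancel_left₀ hp]
    · simp
  simp_rw [hterm] at hsum
  rw [← (mul_right_injective₀ (NeZero.ne p)).hasSum_iff] at hsum
  · refine hsum.congr_fun fun n ↦ ?_
    simp [pow_mul, hqp]
  · intro n hn
    exact if_neg fun ⟨i, hi⟩ ↦ hn ⟨i, hi.symm⟩

lemma heckeOp_apply {N : ℕ} (χ : DirichletCharacter ℤ N) (k : ℕ) (f : ℍ → ℂ) (τ : ℍ) :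
    heckeOp χ (k + 1) p f τ = (p : ℂ)⁻¹ * ∑ j : ZMod p, f (intGL !![1, (j.val : ℤ); 0, p] • τ) +
      (χ p * p ^ k : ℤ) * RegularPartition.dilate p f τ := by
  have hp : (p : ℂ) ≠ 0 := Nat.cast_ne_zero.mpr (NeZero.ne p)
  have hp' : (0 : ℤ) < p := Int.natCast_pos.mpr (NeZero.pos p)
  have hpow : (p : ℂ) ^ (k : ℤ) * (p : ℂ) ^ (-(k + 1) : ℤ) = (p : ℂ)⁻¹ := by
    rw [← zpow_add₀ hp]
    simp
  have hsome (j : ZMod p) : heckeTerm χ (k + 1) f (heckeRep p (some j)) τ =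
      (p : ℂ)⁻¹ * f (intGL !![1, (j.val : ℤ); 0, p] • τ) := by
    rw [← hpow]
    simp [heckeTerm, heckeRep, slash_upperTriangular_apply one_pos hp']
  have hnone : heckeTerm χ (k + 1) f (heckeRep p none) τ =
      (χ p * p ^ k : ℤ) * RegularPartition.dilate p f τ := by
    simp [heckeTerm, heckeRep, slash_upperTriangular_apply hp' one_pos, RegularPartition.dilate,
      mul_assoc]
  rw [heckeOp, Finset.sum_apply, Fintype.sum_option, hnone, Finset.sum_congr rfl fun j _ ↦ hsome j,
    ← Finset.mul_sum, add_comm]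

lemma HasQExpansion.heckeOp {N : ℕ} (χ : DirichletCharacter ℤ N) (k : ℕ) {A : ℤ⟦X⟧}
    (hf : HasQExpansion f A) :
    HasQExpansion (heckeOp χ (k + 1) p f) (heckeSeries p (χ p * p ^ k) A) := by
  have hsum := (hf.decimate (p := p)).add ((C (χ p * p ^ k : ℤ)).mul (hf.dilate (NeZero.ne p)))
  convert! hsum using 1
  ext τ
  simp [heckeOp_apply]

end HeckeExpansions

section EulerProduct

lemma prod_neg_pow_succ {R : Type*} [CommRing R] (x : R) (s : Finset ℕ) :
    ∏ i ∈ s, -x ^ (i + 1) = (-1) ^ s.card * x ^ ∑ i ∈ s, (i + 1) := by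
  rw [Finset.prod_neg, Finset.prod_pow_eq_pow_sum]

open PowerSeries.WithPiTopology in
lemma hasSum_coeff_pentagonalSeries (n : ℕ) :
    HasSum (fun s : Finset ℕ ↦ if ∑ i ∈ s, (i + 1) = n then (-1 : ℤ) ^ s.card else 0)
      (PowerSeries.coeff n (PowerSeries.pentagonalSeries ℤ)) := by
  have hsum : HasSum (fun s : Finset ℕ ↦ ∏ i ∈ s, -(PowerSeries.X : ℤ⟦X⟧) ^ (i + 1))
      (PowerSeries.pentagonalSeries ℤ) := by
    have horder : Tendsto (fun i ↦ (-(PowerSeries.X : ℤ⟦X⟧) ^ (i + 1)).order) atTop (nhds ⊤) := by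
      simp_rw [PowerSeries.order_neg, PowerSeries.order_X_pow]
      exact ENat.tendsto_natCast_nhds_top.comp (tendsto_add_atTop_nat 1)
    have hsummable := summable_prod_of_tendsto_order_atTop_nhds_top ℤ horder
    rw [← tprod_one_sub_X_pow ℤ]
    simpa [sub_eq_add_neg, tprod_one_add hsummable] using hsummable.hasSum
  refine ((hasSum_iff_hasSum_coeff ℤ).mp hsum n).congr_fun fun s ↦ ?_
  rw [prod_neg_pow_succ, ← map_one PowerSeries.C, ← map_neg, ← map_pow, PowerSeries.coeff_C_mul,
    PowerSeries.coeff_X_pow]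
  simp [eq_comm]

-- Both sides are sums over the finite sets of exponents chosen when multiplying out the product.
lemma hasSum_coeff_pentagonalSeries_mul_pow {x : ℂ} (hx : ‖x‖ < 1) :
    HasSum (fun n ↦ ((PowerSeries.coeff n (PowerSeries.pentagonalSeries ℤ) : ℤ) : ℂ) * x ^ n)
      (∏' n : ℕ, (1 - x ^ (n + 1))) := by
  have hnorm : Summable fun n : ℕ ↦ ‖-x ^ (n + 1)‖ := by
    simpa [pow_succ] using (summable_geometric_of_lt_one (norm_nonneg x) hx).mul_right ‖x‖
  have hsummable := summable_finsetProd_of_summable_norm hnorm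
  have hsum : HasSum (fun s : Finset ℕ ↦ (-1) ^ s.card * x ^ ∑ i ∈ s, (i + 1))
      (∏' n : ℕ, (1 - x ^ (n + 1))) := by
    simpa only [sub_eq_add_neg, tprod_one_add hsummable, prod_neg_pow_succ] using hsummable.hasSum
  refine (hsum.tsum_fiberwise fun s ↦ ∑ i ∈ s, (i + 1)).congr_fun fun n ↦ ?_
  have hcoeff := ((hasSum_coeff_pentagonalSeries n).map (Int.castAddHom ℂ)
    continuous_of_discreteTopology).mul_right (x ^ n)
  rw [tsum_subtype ((fun s : Finset ℕ ↦ ∑ i ∈ s, (i + 1)) ⁻¹' {n})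
    fun s ↦ (-1) ^ s.card * x ^ ∑ i ∈ s, (i + 1)]
  refine hcoeff.tsum_eq.symm.trans (tsum_congr fun s ↦ ?_)
  by_cases h : ∑ i ∈ s, (i + 1) = n <;> simp [h]

/-- Euler's product `∏ (1 - qⁿ)`, so that `η(τ) = q^{1/24} · eulerProd τ`. -/
noncomputable def eulerProd (τ : ℍ) : ℂ := ∏' n, (1 - eta_q n τ)

lemma eta_eq_mul_eulerProd (τ : ℍ) : eta τ = qParam 24 τ * eulerProd τ := rfl

lemma eulerProd_ne_zero (τ : ℍ) : eulerProd τ ≠ 0 := eta_tprod_ne_zero τ.2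

lemma mdifferentiable_eulerProd : MDiff eulerProd := by
  rw [UpperHalfPlane.mdifferentiable_iff]
  intro z hz
  have hcoe {w : ℂ} (hw : 0 < w.im) : (eulerProd ∘ ofComplex) w = ∏' n, (1 - eta_q n w) := by
    rw [Function.comp_apply, ofComplex_apply_of_im_pos hw, eulerProd]
  exact (differentiableAt_eta_tprod hz).differentiableWithinAt.congr (fun w hw ↦ hcoe hw) (hcoe hz)

lemma hasQExpansion_eulerProd : HasQExpansion eulerProd (PowerSeries.pentagonalSeries ℤ) :=
  fun τ ↦ hasSum_coeff_pentagonalSeries_mul_pow (norm_qParam_lt_one one_pos τ.im_pos)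

lemma constantCoeff_pentagonalSeries :
    PowerSeries.constantCoeff (PowerSeries.pentagonalSeries ℤ) = 1 := by
  have hzero := PowerSeries.coeff_pentagonalSeries_pentagonal ℤ 0
  rw [show pentagonal 0 = 0 from rfl, PowerSeries.coeff_zero_eq_constantCoeff_apply] at hzero
  simpa using hzero

/-- The `q`-expansion of the modular discriminant. -/
noncomputable def discriminantSeries : ℤ⟦X⟧ :=
  PowerSeries.X * PowerSeries.pentagonalSeries ℤ ^ 24

lemma discriminant_eq_mul_eulerProd_pow :
    ModularForm.discriminant = (fun τ : ℍ ↦ qParam 1 τ) * eulerProd ^ 24 := by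
  ext τ
  rw [ModularForm.discriminant, eta_eq_mul_eulerProd, mul_pow]
  congr 1
  change qParam 24 τ ^ 24 = qParam 1 τ
  rw [qParam, qParam, ← Complex.exp_nat_mul]
  congr 1
  push_cast
  ring

lemma hasQExpansion_discriminant : HasQExpansion ModularForm.discriminant discriminantSeries := by
  rw [discriminant_eq_mul_eulerProd_pow]
  simpa [discriminantSeries] using
    (HasQExpansion.X_pow (R := ℤ) 1).mul (hasQExpansion_eulerProd.pow 24)

lemma isUnit_pentagonalSeries : IsUnit (PowerSeries.pentagonalSeries ℤ) := by
  rw [PowerSeries.isUnit_iff_constantCoeff, constantCoeff_pentagonalSeries]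
  exact isUnit_one

end EulerProduct

section RegularGeneratingFunction

open PowerSeries PowerSeries.WithPiTopology Nat.Partition

lemma continuous_expand {l : ℕ} (hl : l ≠ 0) :
    Continuous (PowerSeries.expand l hl : ℤ⟦X⟧ →ₐ[ℤ] ℤ⟦X⟧) := by
  refine continuous_iff_continuousAt.mpr fun A ↦
    (tendsto_iff_coeff_tendsto ℤ _ _ _).mpr fun n ↦ ?_
  simp only [coeff_expand]
  split_ifs
  · exact (continuous_coeff ℤ _).tendsto A
  · exact tendsto_const_nhds

lemma mk_bReg_mul_pentagonalSeries {l : ℕ} (hl : l ≠ 0) :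
    (PowerSeries.mk fun n ↦ (bReg l n : ℤ)) * pentagonalSeries ℤ =
      PowerSeries.expand l hl (pentagonalSeries ℤ) := by
  have hprod := (hasProd_powerSeriesMk_card_restricted ℤ (¬ l ∣ ·)).mul (hasProd_one_sub_X_pow ℤ)
  have hterm (i : ℕ) : (if ¬ l ∣ i + 1 then ∑' j, (X : ℤ⟦X⟧) ^ ((i + 1) * j) else 1) *
      (1 - X ^ (i + 1)) = if l ∣ i + 1 then 1 - X ^ (i + 1) else 1 := by
    split_ifs
    · rw [one_mul]
    · simp_rw [pow_mul]
      exact tsum_pow_mul_one_sub_of_constantCoeff_eq_zero (by simp)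
  simp_rw [hterm] at hprod
  have hl_pos : 0 < l := Nat.pos_of_ne_zero hl
  have hsucc (i : ℕ) : (i + 1) * l - 1 + 1 = l * (i + 1) := by
    rw [Nat.sub_add_cancel (Nat.mul_pos i.succ_pos hl_pos), mul_comm]
  have hinj : Function.Injective fun i ↦ (i + 1) * l - 1 := fun i j hij ↦ by
    have hval : (i + 1) * l - 1 = (j + 1) * l - 1 := hij
    have hmul : l * (i + 1) = l * (j + 1) := by rw [← hsucc, hval, hsucc]
    exact Nat.succ_injective (Nat.eq_of_mul_eq_mul_left hl_pos hmul)
  rw [← hinj.hasProd_iff] at hprod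
  · have hexpand := (hasProd_one_sub_X_pow ℤ).map (expand l hl) (continuous_expand hl)
    refine HasProd.unique ?_ hexpand
    exact hprod.congr_fun fun i ↦ by simp [hsucc, pow_mul]
  · intro i hi
    refine if_neg fun ⟨j, hj⟩ ↦ hi ⟨j - 1, ?_⟩
    have hj_pos : 0 < j := Nat.pos_of_ne_zero (by rintro rfl; simp at hj)
    simp only [Nat.sub_add_cancel hj_pos]
    lia

end RegularGeneratingFunction

section DivDiscriminant

lemma associated_X_discriminantSeries : Associated PowerSeries.X discriminantSeries :=
  ⟨(isUnit_pentagonalSeries.pow 24).unit, rfl⟩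

lemma hasQExpansion_eulerProd_inv {B : ℤ⟦X⟧} (hB : PowerSeries.pentagonalSeries ℤ * B = 1) :
    HasQExpansion eulerProd⁻¹ B :=
  hasQExpansion_eulerProd.inv mdifferentiable_eulerProd eulerProd_ne_zero hB

lemma HasQExpansion.mul_discriminant_inv {f : ℍ → ℂ} {A : ℤ⟦X⟧}
    (hf : HasQExpansion f (A * discriminantSeries)) :
    HasQExpansion (f * ModularForm.discriminant⁻¹) A := by
  obtain ⟨B, hB⟩ := isUnit_pentagonalSeries.exists_right_inv
  have hcancel : A * discriminantSeries * B ^ 24 = PowerSeries.X ^ 1 * A := by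
    calc A * discriminantSeries * B ^ 24
        = PowerSeries.X ^ 1 * A * (PowerSeries.pentagonalSeries ℤ * B) ^ 24 := by
          rw [discriminantSeries]; ring
      _ = PowerSeries.X ^ 1 * A := by rw [hB, one_pow, mul_one]
  have hshift := HasQExpansion.of_X_pow_mul
    (hcancel ▸ hf.mul ((hasQExpansion_eulerProd_inv hB).pow 24))
  convert! hshift using 1
  ext τ
  simp only [discriminant_eq_mul_eulerProd_pow, Pi.mul_apply, Pi.inv_apply, Pi.pow_apply, mul_inv,
    inv_pow, Nat.cast_one, _root_.zpow_neg_one]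
  ring

end DivDiscriminant

section DecimateModPrime

lemma decimate_mul_expand {R : Type*} [CommRing R] {p : ℕ} (hp : p ≠ 0) (A B : R⟦X⟧) :
    decimate p (A * PowerSeries.expand p hp B) = decimate p A * B := by
  have hp_pos : 0 < p := Nat.pos_of_ne_zero hp
  ext n
  rw [coeff_decimate, PowerSeries.coeff_mul, PowerSeries.coeff_mul]
  refine (Finset.sum_of_injOn (fun i : ℕ × ℕ ↦ (p * i.1, p * i.2)) ?_ ?_ ?_ ?_).symm
  · rintro ⟨i, j⟩ _ ⟨i', j'⟩ _ h
    simp only [Prod.mk.injEq] at h ⊢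
    exact ⟨Nat.eq_of_mul_eq_mul_left hp_pos h.1, Nat.eq_of_mul_eq_mul_left hp_pos h.2⟩
  · rintro ⟨i, j⟩ h
    simp only [Finset.mem_coe, Finset.HasAntidiagonal.mem_antidiagonal] at h ⊢
    rw [← h, mul_add]
  · rintro ⟨i, j⟩ hij hrange
    rw [PowerSeries.coeff_expand, if_neg, mul_zero]
    rintro ⟨j', rfl⟩
    rw [Finset.HasAntidiagonal.mem_antidiagonal] at hij
    obtain ⟨i', rfl⟩ : p ∣ i := (Nat.dvd_add_left (dvd_mul_right p j')).mp (hij ▸ dvd_mul_right p n)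
    refine hrange ⟨(i', j'), ?_, rfl⟩
    rw [Finset.mem_coe, Finset.HasAntidiagonal.mem_antidiagonal]
    exact Nat.eq_of_mul_eq_mul_left hp_pos (by rw [mul_add, hij])
  · rintro ⟨i, j⟩ _
    rw [coeff_decimate, PowerSeries.coeff_expand_mul]

lemma pow_prime_eq_expand {p : ℕ} [hp : Fact p.Prime] (A : (ZMod p)⟦X⟧) :
    A ^ p = PowerSeries.expand p hp.out.ne_zero A := by
  have hfrob := MvPowerSeries.map_frobenius_expand (σ := Unit) p hp.out.ne_zero (f := A)
  rw [ZMod.frobenius_zmod, MvPowerSeries.map_id] at hfrob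
  exact hfrob.symm

lemma map_heckeSeries_of_eq_zero {R S : Type*} [CommRing R] [CommRing S] (φ : R →+* S) (p : ℕ)
    [NeZero p] {c : R} (hc : φ c = 0) (A : R⟦X⟧) :
    PowerSeries.map φ (heckeSeries p c A) = decimate p (PowerSeries.map φ A) := by
  ext n
  simp [heckeSeries, hc]

lemma constantCoeff_heckeSeries {R : Type*} [CommRing R] (p : ℕ) [NeZero p] (c : R) (A : R⟦X⟧) :
    PowerSeries.constantCoeff (heckeSeries p c A) = (1 + c) * PowerSeries.constantCoeff A := by
  rw [← PowerSeries.coeff_zero_eq_constantCoeff_apply, coeff_heckeSeries]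
  simp [heckeSeq, add_mul]

variable {m : ℕ} [Fact m.Prime] {N : ℕ} {χ : DirichletCharacter ℤ N} {k : ℕ} {e : ℝ} {f : ℍ → ℂ}
  {A : ℤ⟦X⟧}

lemma map_discriminantSeries_ne_zero {R : Type*} [CommRing R] [Nontrivial R] :
    PowerSeries.map (Int.castRingHom R) discriminantSeries ≠ 0 := fun h ↦ by
  have hassoc := associated_X_discriminantSeries.map (PowerSeries.map (Int.castRingHom R))
  rw [h, associated_zero_iff_eq_zero, PowerSeries.map_X] at hassoc
  exact PowerSeries.X_ne_zero hassoc

/-- Since `Δ ^ m ≡ Δ(mτ)` modulo `m`, applying `T_m` to `f Δ ^ m` and dividing by `Δ` gives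
`U_m f` modulo `m`. -/
lemma IsWeakForm.exists_map_eq_decimate (hf : IsWeakForm N χ k e f) (hA : HasQExpansion f A)
    (hmN : m.Coprime N) (he : e ≤ m) :
    ∃ (l : ℕ) (g : ℍ → ℂ) (B : ℤ⟦X⟧), IsWeakForm N χ (l + 1 : ℕ) (e / m) g ∧ HasQExpansion g B ∧
      PowerSeries.map (Int.castRingHom (ZMod m)) B =
        decimate m (PowerSeries.map (Int.castRingHom (ZMod m)) A) := by
  have hm : 1 < m := (Fact.out : m.Prime).one_lt
  obtain ⟨l, hl⟩ : ∃ l, k + 12 * m = (l + 12) + 1 := ⟨k + 12 * m - 13, by lia⟩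
  set c : ℤ := χ m * m ^ (l + 12)
  have hg : IsWeakForm N χ ((l + 12 : ℕ) + 1) (e - m) (f * ModularForm.discriminant ^ m) := by
    convert hf.mul_of_trivial (IsWeakForm.discriminant.pow m) using 1
    · rw [mul_comm (m : ℤ)]; exact_mod_cast hl.symm
    · ring
  have hgA := ((hA.mul (hasQExpansion_discriminant.pow m)).heckeOp (p := m) χ (l + 12))
  obtain ⟨B, hB⟩ : discriminantSeries ∣ heckeSeries m c (A * discriminantSeries ^ m) := by
    rw [← associated_X_discriminantSeries.dvd_iff_dvd_left, PowerSeries.X_dvd_iff,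
      constantCoeff_heckeSeries]
    simp [discriminantSeries, (Fact.out : m.Prime).ne_zero]
  rw [hB, mul_comm discriminantSeries] at hgA
  refine ⟨l, _, B, ?_, hgA.mul_discriminant_inv, ?_⟩
  · convert (hg.heckeOp (by linarith) hmN).mul_of_trivial IsWeakForm.discriminant_inv using 1
    · push_cast; ring
    · field_simp; ring
  · refine mul_right_cancel₀ (map_discriminantSeries_ne_zero (R := ZMod m)) ?_
    rw [← decimate_mul_expand (Fact.out : m.Prime).ne_zero, ← pow_prime_eq_expand, ← map_pow,
      ← map_mul, ← map_mul, mul_comm B, ← hB, map_heckeSeries_of_eq_zero]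
    simp [c]

lemma decimate_decimate {R : Type*} [CommRing R] (p q : ℕ) (A : R⟦X⟧) :
    decimate p (decimate q A) = decimate (q * p) A := by
  ext n
  simp [mul_assoc]

lemma IsWeakForm.exists_map_eq_decimate_pow_succ (hf : IsWeakForm N χ k e f)
    (hA : HasQExpansion f A) (hmN : m.Coprime N) (he : e ≤ m) (s : ℕ) :
    ∃ (l : ℕ) (g : ℍ → ℂ) (B : ℤ⟦X⟧), IsWeakForm N χ (l + 1 : ℕ) (e / m ^ (s + 1)) g ∧
      HasQExpansion g B ∧ PowerSeries.map (Int.castRingHom (ZMod m)) B =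
        decimate (m ^ (s + 1)) (PowerSeries.map (Int.castRingHom (ZMod m)) A) := by
  have hm : (1 : ℝ) ≤ m := Nat.one_le_cast.mpr (Fact.out : m.Prime).one_le
  induction s with
  | zero => simpa using hf.exists_map_eq_decimate hA hmN he
  | succ s ih =>
    obtain ⟨l, g, B, hg, hB, hmap⟩ := ih
    have hle : e / m ^ (s + 1) ≤ m := (div_le_iff₀ (by positivity)).mpr <|
      he.trans (le_mul_of_one_le_right (by positivity) (one_le_pow₀ hm))
    obtain ⟨l', g', B', hg', hB', hmap'⟩ := hg.exists_map_eq_decimate hB hmN hle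
    refine ⟨l', g', B', ?_, hB', ?_⟩
    · rwa [div_div, ← pow_succ] at hg'
    · rw [hmap', hmap, decimate_decimate, pow_succ _ (s + 1)]

/-- Iterating `U_m` modulo `m` divides the order of the poles by `m` each time, hence eventually
removes them. -/
lemma IsWeakForm.exists_isWeakForm_zero_map_eq_decimate [NeZero N] (hf : IsWeakForm N χ k e f)
    (hA : HasQExpansion f A) (hmN : m.Coprime N) (he : e ≤ m) :
    ∃ (s l : ℕ) (g : ℍ → ℂ) (B : ℤ⟦X⟧), IsWeakForm N χ (l + 1 : ℕ) 0 g ∧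
      HasQExpansion g B ∧ PowerSeries.map (Int.castRingHom (ZMod m)) B =
        decimate (m ^ s) (PowerSeries.map (Int.castRingHom (ZMod m)) A) := by
  have hm : (1 : ℝ) < m := Nat.one_lt_cast.mpr (Fact.out : m.Prime).one_lt
  have hN : (0 : ℝ) < N := Nat.cast_pos.mpr (NeZero.pos N)
  obtain ⟨s, hs⟩ := pow_unbounded_of_one_lt (N * e) hm
  obtain ⟨l, g, B, hg, hB, hmap⟩ := hf.exists_map_eq_decimate_pow_succ hA hmN he s
  refine ⟨s + 1, l, g, B, hg.of_lt_inv ?_, hB, hmap⟩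
  rw [div_lt_div_iff₀ (by positivity) hN, one_mul, mul_comm]
  exact hs.trans_le (pow_le_pow_right₀ hm.le s.le_succ)

end DecimateModPrime

section Finiteness

variable {N : ℕ} {χ : DirichletCharacter ℤ N} {k : ℤ} {f : ℍ → ℂ} {A : ℤ⟦X⟧}

/-- The lattice of integral `q`-expansions of holomorphic modular forms of level `Γ₀(N)`,
weight `k` and character `χ`. -/
def integralQExpansions (N : ℕ) (χ : DirichletCharacter ℤ N) (k : ℤ) : Submodule ℤ ℤ⟦X⟧ where
  carrier := {A | ∃ f, IsWeakForm N χ k 0 f ∧ HasQExpansion f A}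
  zero_mem' := ⟨0, IsWeakForm.zero, fun τ ↦ by simp⟩
  add_mem' := fun ⟨f, hf, hA⟩ ⟨g, hg, hB⟩ ↦ ⟨f + g, hf.add hg, hA.add hB⟩
  smul_mem' := fun c A ⟨f, hf, hA⟩ ↦ ⟨(c : ℂ) • f, hf.const_smul c, by
    simpa [PowerSeries.smul_eq_C_mul] using! (HasQExpansion.C c).mul hA⟩

lemma IsWeakForm.qExpansion_eq_zero [NeZero N] (hf : IsWeakForm N χ k 0 f)
    (hA : HasQExpansion f A) {M : ℕ}
    (hM : k * ((CongruenceSubgroup.Gamma1 N).map (mapGL ℝ)).relIndex 𝒮ℒ < 12 * M)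
    (hdvd : PowerSeries.X ^ M ∣ A) : A = 0 :=
  (hf.eq_zero_of_growth (hA.hasExpGrowth hdvd) hM ▸ hA).eq_zero

instance [NeZero N] : Module.Finite ℤ (integralQExpansions N χ k) := by
  obtain ⟨M, hM⟩ : ∃ M : ℕ, k * ((CongruenceSubgroup.Gamma1 N).map (mapGL ℝ)).relIndex 𝒮ℒ <
      12 * M := by
    obtain ⟨M, hM⟩ := exists_nat_gt (k * ((CongruenceSubgroup.Gamma1 N).map (mapGL ℝ)).relIndex 𝒮ℒ)
    exact ⟨M, by lia⟩
  let truncation : integralQExpansions N χ k →ₗ[ℤ] Fin M → ℤ :=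
    LinearMap.pi (fun i ↦ PowerSeries.coeff i) ∘ₗ (integralQExpansions N χ k).subtype
  refine Module.Finite.of_injective truncation <|
    (injective_iff_map_eq_zero truncation).mpr fun ⟨A, f, hf, hA⟩ hcoeff ↦ Subtype.ext ?_
  exact hf.qExpansion_eq_zero hA hM <|
    PowerSeries.X_pow_dvd_iff.mpr fun i hi ↦ congrFun hcoeff ⟨i, hi⟩

/-- The coefficient sequences modulo `m` of the members of `integralQExpansions N χ k`. -/
noncomputable def coeffsMod (m N : ℕ) (χ : DirichletCharacter ℤ N) (k : ℤ) :
    Submodule (ZMod m) (ℕ → ZMod m) :=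
  AddSubgroup.toZModSubmodule m <| ((integralQExpansions N χ k).map <|
    LinearMap.pi fun n ↦ (Int.castAddHom (ZMod m)).toIntLinearMap ∘ₗ
      PowerSeries.coeff n).toAddSubgroup

lemma mem_coeffsMod {m : ℕ} {a : ℕ → ZMod m} :
    a ∈ coeffsMod m N χ k ↔ ∃ A ∈ integralQExpansions N χ k,
      a = fun n ↦ ((PowerSeries.coeff n A : ℤ) : ZMod m) := by
  simp only [eq_comm (a := a)]
  rfl

instance {m : ℕ} [NeZero m] [NeZero N] : Finite (coeffsMod m N χ k) := by
  have : Module.Finite ℤ (coeffsMod m N χ k) := Module.Finite.map (integralQExpansions N χ k) _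
  have := Module.Finite.of_restrictScalars_finite ℤ (ZMod m) (coeffsMod m N χ k)
  exact Module.finite_of_finite (ZMod m)

lemma heckeSeq_mem_coeffsMod {m p : ℕ} [Fact p.Prime] (hpN : p.Coprime N) {l : ℕ} {a : ℕ → ZMod m}
    (ha : a ∈ coeffsMod m N χ (l + 1 : ℕ)) :
    heckeSeq p ((χ p * p ^ l : ℤ) : ZMod m) a ∈ coeffsMod m N χ (l + 1 : ℕ) := by
  obtain ⟨A, ⟨f, hf, hA⟩, rfl⟩ := mem_coeffsMod.mp ha
  refine mem_coeffsMod.mpr ⟨heckeSeries p (χ p * p ^ l) A, ⟨_, ?_, hA.heckeOp χ l⟩, ?_⟩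
  · simpa using hf.heckeOp le_rfl hpN
  · ext n
    rw [coeff_heckeSeries]
    simp only [heckeSeq]
    split_ifs <;> push_cast <;> rfl

lemma IsWeakForm.exists_coeff_pow_mul_eq_zero [NeZero N] {l m p : ℕ} [NeZero m] [Fact p.Prime]
    (hf : IsWeakForm N χ (l + 1 : ℕ) 0 f) (hA : HasQExpansion f A) (hpN : p.Coprime N)
    (hpm : p.Coprime m) :
    ∃ r, ∀ n, ¬ p ∣ n → ((PowerSeries.coeff (p ^ r * n) A : ℤ) : ZMod m) = 0 := by
  have hunit : IsUnit ((χ p * p ^ l : ℤ) : ZMod m) := by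
    have hχ : IsUnit (χ p) := ((ZMod.isUnit_iff_coprime p N).mpr hpN).map χ
    have hp : IsUnit (p : ZMod m) := (ZMod.isUnit_iff_coprime p m).mpr hpm
    simpa using (hχ.map (Int.castRingHom (ZMod m))).mul (hp.pow l)
  exact RegularPartition.exists_coeff_pow_mul_eq_zero (Fact.out : p.Prime).pos hunit
    (fun _ ↦ heckeSeq_mem_coeffsMod hpN) (mem_coeffsMod.mpr ⟨A, ⟨f, hf, hA⟩, rfl⟩)

end Finiteness

section Gamma0Generators

lemma exists_two_mul_abs_add_mul_le (a : ℤ) {b : ℤ} (hb : b ≠ 0) : ∃ k, 2 * |a + k * b| ≤ |b| := by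
  have hpos : 0 < b.natAbs := Int.natAbs_pos.mpr hb
  obtain ⟨k, hk⟩ : b ∣ a.bmod b.natAbs - a := Int.natAbs_dvd.mp Int.dvd_bmod_sub_self
  have hmod : a + k * b = a.bmod b.natAbs := by rw [mul_comm, ← hk, add_sub_cancel]
  have hlt := Int.bmod_lt (x := a) hpos
  have habs : |a + k * b| ≤ b.natAbs / 2 :=
    hmod ▸ abs_le.mpr ⟨Int.le_bmod hpos, by lia⟩
  rw [Int.abs_eq_natAbs b]
  exact ⟨k, by lia⟩

/-- The matrix `(1 0; n 1)`. -/
def lowerT (n : ℤ) : SL(2, ℤ) := ModularGroup.S * ModularGroup.T ^ (-n) * ModularGroup.S⁻¹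

lemma coe_lowerT (n : ℤ) : (lowerT n : Matrix (Fin 2) (Fin 2) ℤ) = !![1, 0; n, 1] := by
  rw [lowerT, Matrix.SpecialLinearGroup.coe_mul, Matrix.SpecialLinearGroup.coe_mul,
    Matrix.SpecialLinearGroup.coe_inv, ModularGroup.coe_T_zpow, ModularGroup.coe_S]
  simp

lemma lowerT_mul (n k : ℤ) : lowerT (n * k) = lowerT n ^ k := by
  rw [lowerT, lowerT, conj_zpow, ← _root_.zpow_mul, neg_mul]

lemma lowerT_mem_Gamma0 (p : ℕ) : lowerT p ∈ CongruenceSubgroup.Gamma0 p := by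
  simp [CongruenceSubgroup.Gamma0_mem, coe_lowerT]

lemma T_mem_Gamma0 (p : ℕ) : ModularGroup.T ∈ CongruenceSubgroup.Gamma0 p := by
  simp [CongruenceSubgroup.Gamma0_mem, ModularGroup.coe_T]

lemma mem_of_lower_left_eq_zero {G : Subgroup SL(2, ℤ)} (hT : ModularGroup.T ∈ G)
    (hneg : -1 ∈ G) {γ : SL(2, ℤ)} (hγ : γ 1 0 = 0) : γ ∈ G := by
  obtain ⟨n, rfl | rfl⟩ : ∃ n : ℤ, γ = ModularGroup.T ^ n ∨ γ = -1 * ModularGroup.T ^ n := by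
    have hdet := γ.det_coe
    rw [Matrix.det_fin_two, hγ, mul_zero, sub_zero] at hdet
    rcases Int.eq_one_or_neg_one_of_mul_eq_one' hdet with ⟨ha, hd⟩ | ⟨ha, hd⟩
    · refine ⟨γ 0 1, Or.inl ?_⟩
      ext i j
      fin_cases i <;> fin_cases j <;> simp [ModularGroup.coe_T_zpow, ha, hd, hγ]
    · refine ⟨-γ 0 1, Or.inr ?_⟩
      ext i j
      fin_cases i <;> fin_cases j <;> simp [ModularGroup.coe_T_zpow, ha, hd, hγ]
  · exact zpow_mem hT n
  · exact mul_mem hneg (zpow_mem hT n)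

-- Division with balanced remainders: modulo `T` the lower row `(c, d)` has `|d| ≤ |c| / 2`, and
-- then modulo `lowerT p` it has `|c| ≤ p |d| / 2`, a decrease as `p < 4`.
lemma exists_natAbs_lower_left_lt {p : ℕ} (hp : 1 < p) (hp4 : p < 4) {γ : SL(2, ℤ)}
    (hγ : γ ∈ CongruenceSubgroup.Gamma0 p) (hc : γ 1 0 ≠ 0) :
    ∃ k l : ℤ, ((γ * ModularGroup.T ^ k * lowerT p ^ l) 1 0).natAbs < (γ 1 0).natAbs := by
  obtain ⟨c, hpc⟩ : (p : ℤ) ∣ γ 1 0 := by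
    rwa [← ZMod.intCast_zmod_eq_zero_iff_dvd, ← CongruenceSubgroup.Gamma0_mem]
  obtain ⟨k, hk⟩ := exists_two_mul_abs_add_mul_le (γ 1 1) hc
  have hd : γ 1 1 + k * γ 1 0 ≠ 0 := by
    intro hd
    have hdet := γ.det_coe
    rw [Matrix.det_fin_two, eq_neg_of_add_eq_zero_left hd, hpc] at hdet
    have hdvd : (p : ℤ) ∣ 1 := ⟨-c * (γ 0 0 * k + γ 0 1), by linear_combination -hdet⟩
    have := Int.le_of_dvd one_pos hdvd
    lia
  obtain ⟨l, hl⟩ := exists_two_mul_abs_add_mul_le (γ 1 0)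
    (mul_ne_zero (Int.natCast_ne_zero.mpr (by lia : p ≠ 0)) hd)
  have hentry : (γ * ModularGroup.T ^ k * lowerT p ^ l) 1 0 =
      γ 1 0 + l * (p * (γ 1 1 + k * γ 1 0)) := by
    simp only [← lowerT_mul, Matrix.SpecialLinearGroup.coe_mul, coe_lowerT,
      ModularGroup.coe_T_zpow, Matrix.mul_apply, Fin.sum_univ_two, Matrix.of_apply,
      Matrix.cons_val', Matrix.cons_val_zero, Matrix.cons_val_one, Matrix.cons_val_fin_one]
    ring
  have hpos : 0 < |γ 1 0| := abs_pos.mpr hc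
  have hp3 : (p : ℤ) ≤ 3 := by lia
  rw [abs_mul, Nat.abs_cast] at hl
  refine ⟨k, l, ?_⟩
  rw [hentry]
  zify
  linarith [mul_le_mul_of_nonneg_right hp3 (abs_nonneg (γ 1 1 + k * γ 1 0))]

lemma Gamma0_le_closure {p : ℕ} (hp : 1 < p) (hp4 : p < 4) :
    CongruenceSubgroup.Gamma0 p ≤ Subgroup.closure {ModularGroup.T, lowerT p, -1} := by
  intro γ hγ
  set G := Subgroup.closure {ModularGroup.T, lowerT p, (-1 : SL(2, ℤ))}
  have hT : ModularGroup.T ∈ G := Subgroup.subset_closure (by simp)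
  have hV : lowerT p ∈ G := Subgroup.subset_closure (by simp)
  have hneg : -1 ∈ G := Subgroup.subset_closure (by simp)
  induction hn : (γ 1 0).natAbs using Nat.strong_induction_on generalizing γ with
  | _ n ih =>
    by_cases hc : γ 1 0 = 0
    · exact mem_of_lower_left_eq_zero hT hneg hc
    obtain ⟨k, l, hlt⟩ := exists_natAbs_lower_left_lt hp hp4 hγ hc
    have hδ := ih _ (hn ▸ hlt) (mul_mem (mul_mem hγ (zpow_mem (T_mem_Gamma0 p) k))
      (zpow_mem (lowerT_mem_Gamma0 p) l)) rfl
    rwa [G.mul_mem_cancel_right (zpow_mem hV l), G.mul_mem_cancel_right (zpow_mem hT k)] at hδ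

end Gamma0Generators

section EtaQuotient

lemma eta_add_intCast (z : ℂ) (n : ℤ) :
    eta (z + n) = ZMod.stdAddChar (n : ZMod 24) * eta z := by
  have hq : qParam 1 (z + n) = qParam 1 z := by
    rw [qParam, qParam, Complex.exp_eq_exp_iff_exists_int]
    exact ⟨n, by push_cast; ring⟩
  have hq24 : qParam 24 (z + n) = ZMod.stdAddChar (n : ZMod 24) * qParam 24 z := by
    rw [ZMod.stdAddChar_coe, qParam, qParam, ← Complex.exp_add]
    congr 1
    push_cast
    ring
  simp only [eta, eta_q, hq, hq24, mul_assoc]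

lemma sqrt_ofReal_mul {r : ℝ} (hr : 0 < r) {z : ℂ} (hz : z ≠ 0) :
    Complex.sqrt (r * z) = Complex.sqrt r * Complex.sqrt z := by
  have hr' : (r : ℂ) ≠ 0 := Complex.ofReal_ne_zero.mpr hr.ne'
  simp only [Complex.sqrt]
  rw [Complex.cpow_def_of_ne_zero (mul_ne_zero hr' hz), Complex.cpow_def_of_ne_zero hr',
    Complex.cpow_def_of_ne_zero hz, Complex.log_ofReal_mul hr hz, ← Complex.exp_add,
    Complex.ofReal_log hr.le, add_mul]

lemma eta_neg_inv {z : ℂ} (hz : 0 < z.im) :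
    eta (-1 / z) = (Complex.sqrt Complex.I)⁻¹ * (Complex.sqrt z * eta z) :=
  eta_comp_eq_csqrt_I_inv hz

/-- The quotient `η(pτ) / η(τ)`. -/
noncomputable def etaQuot (p : ℕ) (τ : ℍ) : ℂ := eta (p * τ) / eta τ

variable {p : ℕ}

lemma im_natCast_mul_pos (hp : p ≠ 0) (τ : ℍ) : 0 < ((p : ℂ) * τ).im := by
  rw [← coe_dilation_smul hp]
  exact im_pos _

lemma etaQuot_S_smul (hp : p ≠ 0) (τ : ℍ) :
    etaQuot p (ModularGroup.S • τ) = Complex.sqrt ((p : ℝ)⁻¹ : ℝ) * (eta (τ / p) / eta τ) := by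
  have hpC : (p : ℂ) ≠ 0 := Nat.cast_ne_zero.mpr hp
  have hp0 : (0 : ℝ) < (p : ℝ)⁻¹ := inv_pos.mpr (Nat.cast_pos.mpr (Nat.pos_of_ne_zero hp))
  have hdiv : (τ : ℂ) / p = ((p : ℝ)⁻¹ : ℝ) * (τ : ℂ) := by
    push_cast
    ring
  have him : 0 < ((τ : ℂ) / p).im := by
    rw [hdiv, Complex.im_ofReal_mul]
    exact mul_pos hp0 τ.im_pos
  have hcoe : ((ModularGroup.S • τ : ℍ) : ℂ) = -1 / τ := by
    rw [modular_S_smul, coe_mk, inv_neg, neg_div, one_div]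
  have hmul : (p : ℂ) * (-1 / τ) = -1 / (τ / p) := by
    have := τ.ne_zero
    field_simp
  have hI : Complex.sqrt Complex.I ≠ 0 := by simp [Complex.sqrt]
  have hτ : Complex.sqrt τ ≠ 0 := by simp [Complex.sqrt, τ.ne_zero]
  rw [etaQuot, hcoe, hmul, eta_neg_inv him, eta_neg_inv τ.im_pos,
    mul_div_mul_left _ _ (inv_ne_zero hI), hdiv, sqrt_ofReal_mul hp0 τ.ne_zero, mul_right_comm,
    mul_comm (Complex.sqrt τ), mul_div_mul_right _ _ hτ, mul_div_assoc]

lemma etaQuot_T_smul (τ : ℍ) :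
    etaQuot p (ModularGroup.T • τ) = ZMod.stdAddChar (p - 1 : ZMod 24) * etaQuot p τ := by
  have hcoe : ((ModularGroup.T • τ : ℍ) : ℂ) = τ + (1 : ℤ) := by
    rw [modular_T_smul, coe_vadd, add_comm]
    simp
  have hmul : (p : ℂ) * (τ + (1 : ℤ)) = p * τ + (p : ℤ) := by
    push_cast
    ring
  rw [etaQuot, hcoe, hmul, eta_add_intCast, eta_add_intCast, mul_div_mul_comm,
    ← AddChar.map_sub_eq_div, Int.cast_one, Int.cast_natCast, etaQuot]

lemma etaQuot_lowerT_smul (hp : p ≠ 0) (τ : ℍ) :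
    etaQuot p (lowerT p • τ) = ZMod.stdAddChar (p - 1 : ZMod 24) * etaQuot p τ := by
  have hpC : (p : ℂ) ≠ 0 := Nat.cast_ne_zero.mpr hp
  obtain ⟨σ, rfl⟩ : ∃ σ, ModularGroup.S • σ = τ := ⟨_, smul_inv_smul _ τ⟩
  have hcoe : ((ModularGroup.T ^ (-p : ℤ) • σ : ℍ) : ℂ) = σ + (-p : ℤ) := by
    rw [modular_T_zpow_smul, coe_vadd, add_comm]
    simp
  have hdiv : ((σ : ℂ) + (-p : ℤ)) / p = σ / p + (-1 : ℤ) := by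
    push_cast
    field_simp
  rw [lowerT, mul_smul, mul_smul, inv_smul_smul, etaQuot_S_smul hp, etaQuot_S_smul hp, hcoe, hdiv,
    eta_add_intCast, eta_add_intCast, mul_div_mul_comm, ← AddChar.map_sub_eq_div, mul_left_comm]
  congr 2
  push_cast
  ring

/-- The laws which determine the multiplier `v` of `etaQuot p` on `Γ₀(p)`, for `p = 2, 3`, as a
function `v a b c d` of the entries of the matrix `(a b; pc d)`. -/
structure IsEtaQuotMultiplier (p : ℕ) (v : ℤ → ℤ → ℤ → ℤ → ℂ) : Prop where
  one : v 1 0 0 1 = 1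
  mul_T : ∀ a b c d : ℤ, a * d - b * (p * c) = 1 →
    v a (a + b) c (p * c + d) = v a b c d * ZMod.stdAddChar (p - 1 : ZMod 24)
  mul_lowerT : ∀ a b c d : ℤ, a * d - b * (p * c) = 1 →
    v (a + b * p) b (c + d) d = v a b c d * ZMod.stdAddChar (p - 1 : ZMod 24)
  neg : ∀ a b c d : ℤ, a * d - b * (p * c) = 1 → v (-a) (-b) (-c) (-d) = v a b c d

namespace IsEtaQuotMultiplier

variable {v : ℤ → ℤ → ℤ → ℤ → ℂ}

lemma exists_factor_mul_right (hv : IsEtaQuotMultiplier p v) (hp : p ≠ 0) {y : SL(2, ℤ)}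
    (hy : y ∈ ({ModularGroup.T, lowerT p, -1} : Set SL(2, ℤ))) :
    ∃ ζ : ℂ, (∀ τ, etaQuot p (y • τ) = ζ * etaQuot p τ) ∧
      ∀ x ∈ CongruenceSubgroup.Gamma0 p, v ((x * y) 0 0) ((x * y) 0 1) ((x * y) 1 0 / p)
        ((x * y) 1 1) = v (x 0 0) (x 0 1) (x 1 0 / p) (x 1 1) * ζ := by
  have hpZ : (p : ℤ) ≠ 0 := Int.natCast_ne_zero.mpr hp
  have hcancel (c : ℤ) : p * c / p = c := Int.mul_ediv_cancel_left c hpZ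
  have hlower {x : SL(2, ℤ)} (hx : x ∈ CongruenceSubgroup.Gamma0 p) :
      ∃ c, x 1 0 = p * c ∧ x 0 0 * x 1 1 - x 0 1 * (p * c) = 1 := by
    obtain ⟨c, hc⟩ := (ZMod.intCast_zmod_eq_zero_iff_dvd _ p).mp
      (CongruenceSubgroup.Gamma0_mem.mp hx)
    exact ⟨c, hc, by rw [← hc, ← Matrix.det_fin_two, x.det_coe]⟩
  rcases hy with rfl | rfl | rfl
  · refine ⟨_, etaQuot_T_smul, fun x hx ↦ ?_⟩
    obtain ⟨c, hc, hdet⟩ := hlower hx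
    simpa [Matrix.mul_apply, Fin.sum_univ_two, ModularGroup.coe_T, hc, hcancel]
      using hv.mul_T _ _ _ _ hdet
  · refine ⟨_, etaQuot_lowerT_smul hp, fun x hx ↦ ?_⟩
    obtain ⟨c, hc, hdet⟩ := hlower hx
    have hdiv : (p * c + x 1 1 * p : ℤ) / p = c + x 1 1 := by
      rw [mul_comm _ (p : ℤ), ← mul_add, hcancel]
    simpa [Matrix.mul_apply, Fin.sum_univ_two, coe_lowerT, hc, hcancel, hdiv]
      using hv.mul_lowerT _ _ _ _ hdet
  · refine ⟨1, fun τ ↦ by rw [ModularGroup.SL_neg_smul, one_smul, one_mul], fun x hx ↦ ?_⟩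
    obtain ⟨c, hc, hdet⟩ := hlower hx
    have hdiv : (-(p * c) : ℤ) / p = -c := by rw [← mul_neg, hcancel]
    simpa [hc, hcancel, hdiv] using hv.neg _ _ _ _ hdet

lemma etaQuot_smul (hv : IsEtaQuotMultiplier p v) (hp : 1 < p) (hp4 : p < 4) {γ : SL(2, ℤ)}
    (hγ : γ ∈ CongruenceSubgroup.Gamma0 p) (τ : ℍ) :
    etaQuot p (γ • τ) = v (γ 0 0) (γ 0 1) (γ 1 0 / p) (γ 1 1) * etaQuot p τ := by
  have hle : Subgroup.closure {ModularGroup.T, lowerT p, -1} ≤ CongruenceSubgroup.Gamma0 p := by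
    rw [Subgroup.closure_le]
    rintro _ (rfl | rfl | rfl)
    exacts [T_mem_Gamma0 p, lowerT_mem_Gamma0 p, by simp [CongruenceSubgroup.Gamma0_mem]]
  induction Gamma0_le_closure hp hp4 hγ using Subgroup.closure_induction_right
    generalizing τ with
  | one => simp [hv.one]
  | mul_right x hx y hy ih =>
    obtain ⟨ζ, hζ, hmul⟩ := hv.exists_factor_mul_right (by lia) hy
    rw [mul_smul, ih (hle hx), hζ, hmul x (hle hx), mul_assoc]
  | mul_inv_cancel x hx y hy ih =>
    obtain ⟨ζ, hζ, hmul⟩ := hv.exists_factor_mul_right (by lia) hy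
    have hx' : x * y⁻¹ ∈ CongruenceSubgroup.Gamma0 p := hγ
    have hval := hmul _ hx'
    rw [inv_mul_cancel_right] at hval
    rw [mul_smul, ih (hle hx), hval, mul_assoc, ← hζ, smul_inv_smul]

end IsEtaQuotMultiplier

end EtaQuotient

section EtaMultipliers

/-- The multiplier of `η(2τ) / η(τ)` is `χ₈(d) exp (2πi x / 24)` for this integer `x`, by the
classical formula for the multiplier of `η`. -/
def etaPhaseTwo {R : Type*} [CommRing R] (a b c d : R) : R :=
  b * d * (2 * c ^ 2 + 1) + c * (2 * d - a)

/-- The exponent `0` or `4` of `χ₈(d)` as a power of `exp (2πi / 8)`, for odd `d`. -/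
def phaseChiEight (d : ZMod 8) : ZMod 8 := if ZMod.χ₈ d = 1 then 0 else 4

/-- The multiplier of `η(2τ) / η(τ)` at `(a b; 2c d)`, with its parts of order `3` and `8`
separated by `1/24 = -1/3 + 3/8`. -/
noncomputable def etaMultiplierTwo (a b c d : ℤ) : ℂ :=
  ZMod.stdAddChar (-etaPhaseTwo (a : ZMod 3) b c d) *
    ZMod.stdAddChar (phaseChiEight d + 3 * etaPhaseTwo (a : ZMod 8) b c d)

lemma stdAddChar_one_eq_mul :
    ZMod.stdAddChar (1 : ZMod 24) =
      ZMod.stdAddChar (-1 : ZMod 3) * ZMod.stdAddChar (3 : ZMod 8) := by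
  have h24 := ZMod.stdAddChar_coe (N := 24) 1
  have h3 := ZMod.stdAddChar_coe (N := 3) (-1)
  have h8 := ZMod.stdAddChar_coe (N := 8) 3
  push_cast at h24 h3 h8
  rw [h24, h3, h8, ← Complex.exp_add]
  congr 1
  ring

lemma isEtaQuotMultiplier_etaMultiplierTwo : IsEtaQuotMultiplier 2 etaMultiplierTwo where
  one := by simp [etaMultiplierTwo, etaPhaseTwo, phaseChiEight]
  mul_T a b c d hdet := by
    have h3 : ∀ a b c d : ZMod 3, a * d - b * (2 * c) = 1 →
        -etaPhaseTwo a (a + b) c (2 * c + d) = -etaPhaseTwo a b c d + -1 := by decide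
    have h8 : ∀ a b c d : ZMod 8, a * d - b * (2 * c) = 1 →
        phaseChiEight (2 * c + d) + 3 * etaPhaseTwo a (a + b) c (2 * c + d) =
          phaseChiEight d + 3 * etaPhaseTwo a b c d + 3 := by decide +kernel
    have hdet3 := congrArg (Int.cast : ℤ → ZMod 3) hdet
    have hdet8 := congrArg (Int.cast : ℤ → ZMod 8) hdet
    push_cast at hdet3 hdet8
    norm_num only [etaMultiplierTwo]
    push_cast
    rw [h3 _ _ _ _ hdet3, h8 _ _ _ _ hdet8, AddChar.map_add_eq_mul, AddChar.map_add_eq_mul _ _ 3,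
      stdAddChar_one_eq_mul, mul_mul_mul_comm]
  mul_lowerT a b c d hdet := by
    have h3 : ∀ a b c d : ZMod 3, a * d - b * (2 * c) = 1 →
        -etaPhaseTwo (a + b * 2) b (c + d) d = -etaPhaseTwo a b c d + -1 := by decide
    have h8 : ∀ a b c d : ZMod 8, a * d - b * (2 * c) = 1 →
        phaseChiEight d + 3 * etaPhaseTwo (a + b * 2) b (c + d) d =
          phaseChiEight d + 3 * etaPhaseTwo a b c d + 3 := by decide +kernel
    have hdet3 := congrArg (Int.cast : ℤ → ZMod 3) hdet
    have hdet8 := congrArg (Int.cast : ℤ → ZMod 8) hdet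
    push_cast at hdet3 hdet8
    norm_num only [etaMultiplierTwo]
    push_cast
    rw [h3 _ _ _ _ hdet3, h8 _ _ _ _ hdet8, AddChar.map_add_eq_mul, AddChar.map_add_eq_mul _ _ 3,
      stdAddChar_one_eq_mul, mul_mul_mul_comm]
  neg a b c d _ := by
    have h8 : ∀ d : ZMod 8, phaseChiEight (-d) = phaseChiEight d := by decide
    simp only [etaMultiplierTwo, Int.cast_neg, etaPhaseTwo, h8]
    ring_nf

/-- The multiplier of `η(3τ) / η(τ)` at `(a b; 3c d)` is, by the classical formula for `η` and
with `x = bd(3c² + 1)`, equal to `(d/3) χ₄(d) exp (2πi (x + c(2d - a)) / 12)` for odd `d` and to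
`(d/3) exp (2πi (x - c(a + d - 3)) / 12)` for odd `c`. By `1/12 = 1/3 - 1/4` its part of order `4`
is given by this phase, in which `c²` is the indicator of odd `c`. -/
def etaPhaseThree (a b c d : ZMod 4) : ZMod 4 :=
  a * c + (1 - c ^ 2) * (d - 1 - b * d) + c ^ 3 * (d + 1)

/-- The multiplier of `η(3τ) / η(τ)` at `(a b; 3c d)`. -/
noncomputable def etaMultiplierThree (a b c d : ℤ) : ℂ :=
  (quadraticChar (ZMod 3) d : ℤ) * ZMod.stdAddChar (b * d + a * c : ZMod 3) *
    ZMod.stdAddChar (etaPhaseThree a b c d)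

lemma stdAddChar_two_eq_mul :
    ZMod.stdAddChar (2 : ZMod 24) =
      ZMod.stdAddChar (1 : ZMod 3) * ZMod.stdAddChar (-1 : ZMod 4) := by
  have h24 := ZMod.stdAddChar_coe (N := 24) 2
  have h3 := ZMod.stdAddChar_coe (N := 3) 1
  have h4 := ZMod.stdAddChar_coe (N := 4) (-1)
  push_cast at h24 h3 h4
  rw [h24, h3, h4, ← Complex.exp_add]
  congr 1
  ring

lemma stdAddChar_four_two : ZMod.stdAddChar (2 : ZMod 4) = -1 := by
  have h4 := ZMod.stdAddChar_coe (N := 4) 2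
  push_cast at h4
  rw [h4, ← Complex.exp_pi_mul_I]
  congr 1
  ring

lemma isEtaQuotMultiplier_etaMultiplierThree : IsEtaQuotMultiplier 3 etaMultiplierThree where
  one := by simp [etaMultiplierThree, etaPhaseThree]
  mul_T a b c d hdet := by
    have h3 : ∀ a b c d : ZMod 3, a * d - b * (3 * c) = 1 →
        (a + b) * (3 * c + d) + a * c = b * d + a * c + 1 := by decide
    have hχ : ∀ c d : ZMod 3, 3 * c + d = d := by decide
    have h4 : ∀ a b c d : ZMod 4, a * d - b * (3 * c) = 1 →
        etaPhaseThree a (a + b) c (3 * c + d) = etaPhaseThree a b c d + -1 := by decide +kernel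
    have hdet3 := congrArg (Int.cast : ℤ → ZMod 3) hdet
    have hdet4 := congrArg (Int.cast : ℤ → ZMod 4) hdet
    push_cast at hdet3 hdet4
    norm_num only [etaMultiplierThree]
    push_cast
    rw [h3 _ _ _ _ hdet3, h4 _ _ _ _ hdet4, hχ, AddChar.map_add_eq_mul _ _ 1,
      AddChar.map_add_eq_mul _ _ (-1), stdAddChar_two_eq_mul]
    ring
  mul_lowerT a b c d hdet := by
    have h3 : ∀ a b c d : ZMod 3, a * d - b * (3 * c) = 1 →
        b * d + (a + b * 3) * (c + d) = b * d + a * c + 1 := by decide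
    have h4 : ∀ a b c d : ZMod 4, a * d - b * (3 * c) = 1 →
        etaPhaseThree (a + b * 3) b (c + d) d = etaPhaseThree a b c d + -1 := by decide +kernel
    have hdet3 := congrArg (Int.cast : ℤ → ZMod 3) hdet
    have hdet4 := congrArg (Int.cast : ℤ → ZMod 4) hdet
    push_cast at hdet3 hdet4
    norm_num only [etaMultiplierThree]
    push_cast
    rw [h3 _ _ _ _ hdet3, h4 _ _ _ _ hdet4, AddChar.map_add_eq_mul _ _ 1,
      AddChar.map_add_eq_mul _ _ (-1), stdAddChar_two_eq_mul]
    ring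
  neg a b c d hdet := by
    have hχ : ∀ d : ZMod 3, quadraticChar (ZMod 3) (-d) = -quadraticChar (ZMod 3) d := by decide
    have h4 : ∀ a b c d : ZMod 4, a * d - b * (3 * c) = 1 →
        etaPhaseThree (-a) (-b) (-c) (-d) = etaPhaseThree a b c d + 2 := by decide +kernel
    have hdet4 := congrArg (Int.cast : ℤ → ZMod 4) hdet
    push_cast at hdet4
    simp only [etaMultiplierThree, Int.cast_neg, hχ, h4 _ _ _ _ hdet4]
    rw [AddChar.map_add_eq_mul _ _ 2, stdAddChar_four_two]
    ring_nf

lemma stdAddChar_phaseChiEight {a d : ZMod 8} (had : a * d = 1) :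
    ZMod.stdAddChar (phaseChiEight d) = (ZMod.χ₈ d : ℤ) := by
  have h4 := ZMod.stdAddChar_coe (N := 8) 4
  push_cast at h4
  have hexp : ZMod.stdAddChar (4 : ZMod 8) = -1 := by
    rw [h4, ← Complex.exp_pi_mul_I]
    congr 1
    ring
  have hχ : ∀ a d : ZMod 8, a * d = 1 → ZMod.χ₈ d = if ZMod.χ₈ d = 1 then 1 else -1 := by decide
  rw [hχ a d had, phaseChiEight]
  split <;> simp [hexp]

lemma stdAddChar_sub_one_eq_χ₄ {a d : ZMod 4} (had : a * d = 1) :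
    ZMod.stdAddChar (d - 1) = (ZMod.χ₄ d : ℤ) := by
  have hχ : ∀ a d : ZMod 4, a * d = 1 →
      d - 1 = 0 ∧ ZMod.χ₄ d = 1 ∨ d - 1 = 2 ∧ ZMod.χ₄ d = -1 := by decide
  rcases hχ a d had with ⟨hd, hχd⟩ | ⟨hd, hχd⟩ <;> simp [hd, hχd, stdAddChar_four_two]

variable {a b c d : ℤ}

lemma etaMultiplierTwo_of_dvd (hdet : a * d - b * (2 * c) = 1) (hb : 24 ∣ b) (hc : 24 ∣ c) :
    etaMultiplierTwo a b c d = (ZMod.χ₈ d : ℤ) := by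
  obtain ⟨b, rfl⟩ := hb
  obtain ⟨c, rfl⟩ := hc
  have h3 : (24 : ZMod 3) = 0 := by decide
  have h8 : (24 : ZMod 8) = 0 := by decide
  have hdet8 : (a * d : ZMod 8) = 1 := by
    simpa [h8] using congrArg (Int.cast : ℤ → ZMod 8) hdet
  simp [etaMultiplierTwo, etaPhaseTwo, h3, h8, stdAddChar_phaseChiEight hdet8]

lemma etaMultiplierThree_of_dvd (hdet : a * d - b * (3 * c) = 1) (hb : 24 ∣ b) (hc : 24 ∣ c) :
    etaMultiplierThree a b c d = (quadraticChar (ZMod 3) d : ℤ) * (ZMod.χ₄ d : ℤ) := by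
  obtain ⟨b, rfl⟩ := hb
  obtain ⟨c, rfl⟩ := hc
  have h3 : (24 : ZMod 3) = 0 := by decide
  have h4 : (24 : ZMod 4) = 0 := by decide
  have hdet4 : (a * d : ZMod 4) = 1 := by
    simpa [h4] using congrArg (Int.cast : ℤ → ZMod 4) hdet
  simp [etaMultiplierThree, etaPhaseThree, h3, h4, stdAddChar_sub_one_eq_χ₄ hdet4]

end EtaMultipliers

section Dilation

variable {n N : ℕ} {f : ℍ → ℂ}

lemma dilate_eq_smul_slash (hn : n ≠ 0) (f : ℍ → ℂ) (k : ℤ) :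
    dilate n f = (n : ℂ) ^ (1 - k) • (f ∣[k] intGL !![(n : ℤ), 0; 0, 1]) := by
  have hnC : (n : ℂ) ≠ 0 := Nat.cast_ne_zero.mpr hn
  ext τ
  rw [Pi.smul_apply, smul_eq_mul,
    slash_upperTriangular_apply (Int.natCast_pos.mpr (Nat.pos_of_ne_zero hn)) one_pos]
  simp [dilate, ← mul_assoc, ← zpow_add₀ hnC]

lemma mdifferentiable_dilate (hn : n ≠ 0) (hf : MDiff f) : MDiff (dilate n f) := by
  rw [dilate_eq_smul_slash hn f 0]
  exact (hf.slash 0 _).const_smul _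

lemma exists_dilation_smul_smul (hn : n ≠ 0) {γ : SL(2, ℤ)}
    (hγ : γ ∈ CongruenceSubgroup.Gamma0 (n * N)) :
    ∃ δ ∈ CongruenceSubgroup.Gamma0 N,
      (δ 0 0 = γ 0 0 ∧ δ 0 1 = n * γ 0 1 ∧ γ 1 0 = n * δ 1 0 ∧ δ 1 1 = γ 1 1) ∧
      ∀ τ : ℍ, intGL !![(n : ℤ), 0; 0, 1] • γ • τ = δ • intGL !![(n : ℤ), 0; 0, 1] • τ := by
  obtain ⟨c, hc⟩ := (ZMod.intCast_zmod_eq_zero_iff_dvd _ _).mp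
    (CongruenceSubgroup.Gamma0_mem.mp hγ)
  have hγ10 : γ 1 0 = n * (N * c) := by rw [hc, Nat.cast_mul, mul_assoc]
  obtain ⟨δ, hδ⟩ : ∃ δ : SL(2, ℤ),
      (δ : Matrix (Fin 2) (Fin 2) ℤ) = !![γ 0 0, n * γ 0 1; N * c, γ 1 1] := by
    refine ⟨⟨_, ?_⟩, rfl⟩
    rw [Matrix.det_fin_two_of, mul_assoc, mul_left_comm, ← hγ10, ← Matrix.det_fin_two, γ.det_coe]
  have hdil : (!![(n : ℤ), 0; 0, 1]).det ≠ 0 := by simpa using hn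
  have hcomm : !![(n : ℤ), 0; 0, 1] * (γ : Matrix (Fin 2) (Fin 2) ℤ) =
      δ * !![(n : ℤ), 0; 0, 1] := by
    ext i j
    fin_cases i <;> fin_cases j <;>
      simp [Matrix.mul_apply, Fin.sum_univ_two, hδ, hγ10, mul_comm]
  refine ⟨δ, by simp [CongruenceSubgroup.Gamma0_mem, hδ], by simp [hδ, hγ10], fun τ ↦ ?_⟩
  rw [ModularGroup.sl_moeb, ModularGroup.sl_moeb δ, ← intGL_coe, ← intGL_coe, ← mul_smul,
    ← mul_smul, ← intGL_mul hdil (by simp), ← intGL_mul (by simp) hdil, hcomm]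

lemma IsWeakForm.hasExpGrowth_dilate_slash {k : ℤ} {e : ℝ} (hf : IsWeakForm 1 1 k e f) (he : 0 ≤ e)
    (hn : n ≠ 0) (γ : SL(2, ℤ)) : HasExpGrowth (dilate n f ∣[k] γ) (e * n) := by
  have hn' : 0 < (n : ℤ) := Int.natCast_pos.mpr (Nat.pos_of_ne_zero hn)
  obtain ⟨δ, x, y, w, hx, hw, hxw, hδ⟩ := exists_eq_mul_upperTriangular hn'
    ⟨!![(n : ℤ), 0; 0, 1] * γ, by rw [Matrix.det_mul, γ.det_coe, Matrix.det_fin_two_of]; simp⟩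
  have hmat : !![(n : ℤ), 0; 0, 1] * (γ : Matrix (Fin 2) (Fin 2) ℤ) = δ * !![x, y; 0, w] := hδ
  have hinv : f ∣[k] δ = f := hf.slash_eq_of_mem_Gamma1 <| by
    simp [CongruenceSubgroup.Gamma1_mem, eq_iff_true_of_subsingleton]
  have hxn : (x / w : ℝ) ≤ n := by
    rw [div_le_iff₀ (Int.cast_pos.mpr hw)]
    have : x ≤ n * w := by nlinarith
    exact_mod_cast this
  rw [dilate_eq_smul_slash hn f k, SL_smul_slash,
    slash_intGL_slash f k (by simpa using hn), hmat,
    ← slash_slash_intGL f k (det_upperTriangular_ne_zero hx hw), hinv]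
  have hf' : HasExpGrowth f e := by simpa using hf.growth 1
  exact ((hf'.slash_upperTriangular hx hw k).mono (mul_le_mul_of_nonneg_left hxn he)).const_smul _

end Dilation

section DilatedEtaQuotient

variable {n N p : ℕ}

lemma mdifferentiable_etaQuot (hp : p ≠ 0) : MDiff (etaQuot p) := by
  rw [UpperHalfPlane.mdifferentiable_iff]
  have hdiff : DifferentiableOn ℂ (fun z : ℂ ↦ eta (p * z) / eta z) {z | 0 < z.im} := by
    intro z hz
    have hpz := differentiableAt_eta_of_mem_upperHalfPlaneSet (im_natCast_mul_pos hp ⟨z, hz⟩)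
    exact ((hpz.comp z (by fun_prop)).div (differentiableAt_eta_of_mem_upperHalfPlaneSet hz)
      (eta_ne_zero hz)).differentiableWithinAt
  refine hdiff.congr fun z hz ↦ ?_
  simp only [Function.comp_apply, etaQuot, ofComplex_apply_of_im_pos hz]

lemma dilate_etaQuot_pow (hp : p ≠ 0) (hn : n ≠ 0) :
    dilate n (etaQuot p) ^ 24 =
      dilate (n * p) ModularForm.discriminant * dilate n ModularForm.discriminant⁻¹ := by
  ext τ
  simp only [dilate, etaQuot, ModularForm.discriminant, Pi.pow_apply, Pi.mul_apply, Pi.inv_apply,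
    coe_dilation_smul hn, coe_dilation_smul (Nat.mul_ne_zero hn hp), div_eq_mul_inv]
  push_cast
  ring_nf

lemma hasExpGrowth_dilate_etaQuot_slash (hp : p ≠ 0) (hn : n ≠ 0) (γ : SL(2, ℤ)) :
    HasExpGrowth (dilate n (etaQuot p) ∣[(0 : ℤ)] γ) (n / 24) := by
  have hdisc : IsWeakForm 1 1 12 0 ModularForm.discriminant :=
    IsWeakForm.of_slash_eq CuspForm.discriminant.holo' discriminant_slash <| by
      simpa using (IsWeakForm.discriminant.growth (N := 1) 1).mono (by norm_num)
  have hmul := (hdisc.hasExpGrowth_dilate_slash le_rfl (Nat.mul_ne_zero hn hp) γ).mul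
    (IsWeakForm.discriminant_inv.hasExpGrowth_dilate_slash zero_le_one hn γ)
  rw [← mul_slash_SL2, ← dilate_etaQuot_pow hp hn] at hmul
  refine HasExpGrowth.of_pow (n := 24) (by norm_num) ?_
  convert! hmul using 1
  · ext τ
    simp [SL_slash_apply]
  · ring

theorem isWeakForm_dilate_etaQuot {v : ℤ → ℤ → ℤ → ℤ → ℂ} (hv : IsEtaQuotMultiplier p v)
    (hp : 1 < p) (hp4 : p < 4) {M : ℕ} (hM : M ∣ n) (hn : n ≠ 0) (hN : n * p * M ∣ N)
    {χ : DirichletCharacter ℤ N}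
    (hχ : ∀ a b c d : ℤ, a * d - b * (p * c) = 1 → (M : ℤ) ∣ b → (M : ℤ) ∣ c → v a b c d = χ d) :
    IsWeakForm N χ 0 (n / 24) (dilate n (etaQuot p)) where
  mdifferentiable := mdifferentiable_dilate hn (mdifferentiable_etaQuot (by lia))
  slash_eq γ hγ := by
    obtain ⟨c, hc⟩ : ((n * p * M : ℕ) : ℤ) ∣ γ 1 0 :=
      (Int.natCast_dvd_natCast.mpr hN).trans <|
        (ZMod.intCast_zmod_eq_zero_iff_dvd _ _).mp (CongruenceSubgroup.Gamma0_mem.mp hγ)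
    have hγ' : γ ∈ CongruenceSubgroup.Gamma0 (n * p) :=
      CongruenceSubgroup.Gamma0_mem.mpr <| (ZMod.intCast_zmod_eq_zero_iff_dvd _ _).mpr
        ⟨M * c, by rw [hc]; push_cast; ring⟩
    obtain ⟨δ, hδ, ⟨-, h01, h10, h11⟩, hsmul⟩ := exists_dilation_smul_smul hn hγ'
    have hδ10 : δ 1 0 = p * (M * c) := by
      refine mul_left_cancel₀ (Int.natCast_ne_zero.mpr hn) (h10.symm.trans ?_)
      rw [hc]
      push_cast
      ring
    have hdet : δ 0 0 * δ 1 1 - δ 0 1 * (p * (M * c)) = 1 := by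
      rw [← hδ10, ← Matrix.det_fin_two, δ.det_coe]
    have hb : (M : ℤ) ∣ δ 0 1 := h01 ▸ (Int.natCast_dvd_natCast.mpr hM).mul_right _
    ext τ
    rw [SL_slash_apply, neg_zero, zpow_zero, mul_one, dilate, hsmul, hv.etaQuot_smul hp hp4 hδ,
      hδ10, Int.mul_ediv_cancel_left _ (by lia), hχ _ _ _ _ hdet hb (dvd_mul_right _ _), h11]
    rfl
  growth := hasExpGrowth_dilate_etaQuot_slash (by lia) hn

end DilatedEtaQuotient

section RegularGeneratingForm

lemma dilate_etaQuot_apply {n : ℕ} (hn : n ≠ 0) (p : ℕ) (τ : ℍ) :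
    dilate n (etaQuot p) τ = eta (p * (n * τ)) / eta (n * τ) := by
  rw [dilate, etaQuot, coe_dilation_smul hn]

lemma dilate_etaQuot_mul {n p : ℕ} (hn : n ≠ 0) (hp : p ≠ 0) (r : ℕ) :
    dilate (n * p) (etaQuot r) * dilate n (etaQuot p) = dilate n (etaQuot (p * r)) := by
  ext τ
  have hne : eta (p * (n * τ)) ≠ 0 := by
    rw [← coe_dilation_smul hn, ← coe_dilation_smul hp]
    exact eta_ne_zero (UpperHalfPlane.im_pos _)
  rw [Pi.mul_apply, dilate_etaQuot_apply (mul_ne_zero hn hp), dilate_etaQuot_apply hn,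
    dilate_etaQuot_apply hn]
  push_cast
  rw [show (n * p * τ : ℂ) = p * (n * τ) by ring, div_mul_div_cancel₀ hne]
  congr 2
  ring

theorem exists_isWeakForm_dilate_etaQuot_six :
    ∃ χ : DirichletCharacter ℤ 3456, IsWeakForm 3456 χ 0 4 (dilate 24 (etaQuot 6)) := by
  have hcop {a b c d : ℤ} (hdet : a * d - b * c = 1) (hb : 24 ∣ b) : IsCoprime d (3456 : ℕ) := by
    have h24 : IsCoprime d 24 := by
      obtain ⟨b', rfl⟩ := hb
      exact ⟨a, -(b' * c), by linear_combination hdet⟩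
    exact (h24.pow_right (n := 7)).of_isCoprime_of_dvd_right (by norm_num)
  have htwo := isWeakForm_dilate_etaQuot (n := 72) (M := 24) (N := 3456)
    (χ := DirichletCharacter.changeLevel (by norm_num) ZMod.χ₈)
    isEtaQuotMultiplier_etaMultiplierTwo (by norm_num) (by norm_num) (by norm_num) (by norm_num)
    (by norm_num) fun a b c d hdet hb hc ↦ by
      rw [DirichletCharacter.changeLevel_eq_cast_of_dvd' _ _ (hcop hdet hb)]
      exact etaMultiplierTwo_of_dvd hdet hb hc
  have hthree := isWeakForm_dilate_etaQuot (n := 24) (M := 24) (N := 3456)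
    (χ := DirichletCharacter.changeLevel (by norm_num) (quadraticChar (ZMod 3)) *
      DirichletCharacter.changeLevel (by norm_num) ZMod.χ₄)
    isEtaQuotMultiplier_etaMultiplierThree (by norm_num) (by norm_num) dvd_rfl (by norm_num)
    (by norm_num) fun a b c d hdet hb hc ↦ by
      rw [MulChar.mul_apply, DirichletCharacter.changeLevel_eq_cast_of_dvd' _ _ (hcop hdet hb),
        DirichletCharacter.changeLevel_eq_cast_of_dvd' _ _ (hcop hdet hb)]
      simpa using etaMultiplierThree_of_dvd hdet hb hc
  have hmul := htwo.mul hthree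
  rw [show 72 = 24 * 3 from rfl, dilate_etaQuot_mul (by norm_num) (by norm_num)] at hmul
  have hpole : ((24 * 3 : ℕ) : ℝ) / 24 + (24 : ℕ) / 24 = 4 := by norm_num
  exact ⟨_, hpole ▸ hmul⟩

lemma hasQExpansion_dilate_eulerProd_div {l : ℕ} (hl : l ≠ 0) :
    HasQExpansion (dilate l eulerProd * eulerProd⁻¹) (PowerSeries.mk fun n ↦ (bReg l n : ℤ)) := by
  obtain ⟨B, hB⟩ := isUnit_pentagonalSeries.exists_right_inv
  have hmul := (hasQExpansion_eulerProd.dilate hl).mul (hasQExpansion_eulerProd_inv hB)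
  rwa [← mk_bReg_mul_pentagonalSeries hl, mul_assoc, hB, mul_one] at hmul

lemma eta_natCast_mul {n : ℕ} (hn : n ≠ 0) (τ : ℍ) :
    eta (n * τ) = qParam 24 τ ^ n * dilate n eulerProd τ := by
  rw [← coe_dilation_smul hn, eta_eq_mul_eulerProd, dilate, coe_dilation_smul hn, qParam, qParam,
    ← Complex.exp_nat_mul]
  congr 2
  ring

lemma dilate_etaQuot_eq {l : ℕ} (hl : l ≠ 0) :
    dilate 24 (etaQuot l) =
      (fun τ : ℍ ↦ qParam 1 τ ^ (l - 1)) * dilate 24 (dilate l eulerProd * eulerProd⁻¹) := by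
  ext τ
  have hq (w : ℍ) (hw : (w : ℂ) = 24 * τ) : qParam 24 w = qParam 1 τ := by
    rw [hw, qParam, qParam]
    congr 1
    push_cast
    ring
  have hw := coe_dilation_smul (n := 24) (by norm_num) τ
  rw [Pi.mul_apply, dilate, dilate, etaQuot, eta_natCast_mul hl, eta_eq_mul_eulerProd, hq _ hw,
    mul_div_mul_comm, Pi.mul_apply, Pi.inv_apply, div_eq_mul_inv (dilate l _ _),
    pow_sub₀ _ (qParam_ne_zero _) (Nat.one_le_iff_ne_zero.mpr hl), pow_one, div_eq_mul_inv]

lemma hasQExpansion_dilate_etaQuot {l : ℕ} (hl : l ≠ 0) :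
    HasQExpansion (dilate 24 (etaQuot l)) (PowerSeries.X ^ (l - 1) *
      PowerSeries.expand 24 (by norm_num) (PowerSeries.mk fun n ↦ (bReg l n : ℤ))) :=
  dilate_etaQuot_eq hl ▸ (HasQExpansion.X_pow (l - 1)).mul
    ((hasQExpansion_dilate_eulerProd_div hl).dilate (by norm_num))

end RegularGeneratingForm

section Congruence

lemma exists_modEq_of_coprime {a n : ℕ} [NeZero n] (h : a.Coprime n) (b c : ℕ) :
    ∃ x, a * x + b ≡ c [MOD n] := by
  refine ⟨((a : ZMod n)⁻¹ * (c - b)).val, (ZMod.natCast_eq_natCast_iff _ _ _).mp ?_⟩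
  push_cast
  rw [ZMod.natCast_zmod_val]
  linear_combination (c - b : ZMod n) * ZMod.coe_mul_inv_eq_one a h

lemma exists_progression_mul_add_eq {a M p : ℕ} (hM : M ≠ 0) (hp : 1 < p) (h : a.Coprime (M * p))
    (b : ℕ) :
    ∃ A B, 0 < B ∧ B < A ∧ ∀ n, ∃ t, ¬ p ∣ t ∧ a * (A * n + B) + b = M * t := by
  have : NeZero (M * p) := ⟨mul_ne_zero hM (by lia)⟩
  obtain ⟨x, hx⟩ := exists_modEq_of_coprime h b M
  have hpos := NeZero.pos (M * p)
  refine ⟨2 * (M * p), x % (M * p) + M * p, by lia, by have := Nat.mod_lt x hpos; lia,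
    fun n ↦ ?_⟩
  have hmod : 2 * (M * p) * n + (x % (M * p) + M * p) ≡ x [MOD M * p] := by
    rw [show 2 * (M * p) * n + (x % (M * p) + M * p) = x % (M * p) + M * p * (2 * n + 1) by ring]
    simp [Nat.ModEq]
  have hval := ((hmod.mul_left a).add_right b).trans hx
  obtain ⟨t, ht⟩ : M ∣ a * (2 * (M * p) * n + (x % (M * p) + M * p)) + b :=
    (hval.dvd_iff (dvd_mul_right M p)).mpr dvd_rfl
  refine ⟨t, fun hpt ↦ hp.ne' (Nat.dvd_one.mp ?_), ht⟩
  have ht_one : t ≡ 1 [MOD p] :=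
    Nat.ModEq.mul_left_cancel' hM (by rwa [← ht, mul_one])
  exact (ht_one.dvd_iff dvd_rfl).mp hpt

lemma coprime_twentyFour_of_five_le {q : ℕ} (hq : q.Prime) (h : 5 ≤ q) : q.Coprime 24 := by
  have htwo : q.Coprime 2 := (Nat.coprime_primes hq Nat.prime_two).mpr (by lia)
  have hthree : q.Coprime 3 := (Nat.coprime_primes hq Nat.prime_three).mpr (by lia)
  exact (htwo.pow_right 3).mul_right hthree

theorem exists_dvd_bReg_six {m p : ℕ} [Fact m.Prime] [Fact p.Prime] (hm : 5 ≤ m) (hp : 5 ≤ p)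
    (hpm : p ≠ m) :
    ∃ s r : ℕ, ∀ j t : ℕ, ¬ p ∣ t → 24 * j + 5 = m ^ s * p ^ r * t → m ∣ bReg 6 j := by
  have hcop {q : ℕ} [hq : Fact q.Prime] (h : 5 ≤ q) : q.Coprime 3456 :=
    ((coprime_twentyFour_of_five_le hq.out h).pow_right 3).coprime_dvd_right (by norm_num)
  obtain ⟨χ, hf⟩ := exists_isWeakForm_dilate_etaQuot_six
  obtain ⟨s, l, g, B, hg, hB, hmap⟩ := IsWeakForm.exists_isWeakForm_zero_map_eq_decimate (k := 0)
    hf (hasQExpansion_dilate_etaQuot (by norm_num)) (hcop hm) (by exact_mod_cast (by lia : 4 ≤ m))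
  obtain ⟨r, hr⟩ := hg.exists_coeff_pow_mul_eq_zero (m := m) hB (hcop hp)
    ((Nat.coprime_primes Fact.out Fact.out).mpr hpm)
  refine ⟨s, r, fun j t ht hj ↦ (ZMod.natCast_eq_zero_iff _ _).mp ?_⟩
  have hcoeff := congrArg (PowerSeries.coeff (p ^ r * t)) hmap
  rw [PowerSeries.coeff_map, coeff_decimate, ← mul_assoc, ← hj, PowerSeries.coeff_map,
    PowerSeries.coeff_X_pow_mul, PowerSeries.coeff_expand_mul, PowerSeries.coeff_mk] at hcoeff
  simpa using hcoeff.symm.trans (hr t ht)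

end Congruence

end RegularPartition

/-- For every prime `m ≥ 5`, there is a Ramanujan-type congruence
`b_6(An + B) ≡ 0 (mod m)`. -/
theorem b6_ramanujan_type (m : ℕ) (hm : m.Prime) (hm5 : 5 ≤ m) :
    ∃ A B : ℕ, 0 < B ∧ B < A ∧ ∀ n : ℕ, bReg 6 (A * n + B) % m = 0 := by
  have : Fact m.Prime := ⟨hm⟩
  obtain ⟨p, hmp, hp⟩ := Nat.exists_infinite_primes (m + 1)
  have : Fact p.Prime := ⟨hp⟩
  obtain ⟨s, r, hdvd⟩ := RegularPartition.exists_dvd_bReg_six hm5 (p := p) (by lia) (by lia)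
  have hm24 := (RegularPartition.coprime_twentyFour_of_five_le hm hm5).symm
  have hp24 := (RegularPartition.coprime_twentyFour_of_five_le hp (by lia)).symm
  have hcop : Nat.Coprime 24 (m ^ s * p ^ r * p) :=
    ((hm24.pow_right s).mul_right (hp24.pow_right r)).mul_right hp24
  obtain ⟨A, B, hB, hBA, hprog⟩ := RegularPartition.exists_progression_mul_add_eq
    (mul_ne_zero (pow_ne_zero s hm.ne_zero) (pow_ne_zero r hp.ne_zero)) hp.one_lt hcop 5
  refine ⟨A, B, hB, hBA, fun n ↦ Nat.mod_eq_zero_of_dvd ?_⟩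
  obtain ⟨t, ht, hval⟩ := hprog n
  exact hdvd _ t ht hval
end

section
/- If l = 13, then b_4(398) ≢ 0 (mod 3). In particular, the family b_4(3l(ln+j) + (17l^2-1)/8) ≡ 0 (mod 3) fails for l = 13, n = 0, j = 1. -/
/-!
By Glaisher's theorem the generating function of the `m`-regular partitions is
`∏ i ≥ 1, (1 + X ^ i + ⋯ + X ^ ((m - 1) * i))`, and the factors with `i > n` do not affect the
coefficient of `X ^ n`. As there are at most `2 ^ (n - 1)` partitions of `n`, evaluating the
remaining finite product at `x > 2 ^ (n - 1)` (Kronecker substitution) produces an integer whose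
lowest base-`x` digits are these coefficients. Hence `bReg m n` is found by multiplying `n` integers
modulo `x ^ (n + 1)`, which for `m = 4`, `n = 398` is a feasible computation.
-/

open Finset Polynomial PowerSeries.WithPiTopology

lemma coeff_prod_range_of_le {R : Type*} [CommSemiring R] {f : ℕ → PowerSeries R}
    (hf : ∀ i, ∃ g, f i = 1 + PowerSeries.X ^ (i + 1) * g) {n k : ℕ} (hnk : n ≤ k) :
    PowerSeries.coeff n (∏ i ∈ range k, f i) = PowerSeries.coeff n (∏ i ∈ range n, f i) := by
  induction k, hnk using Nat.le_induction with
  | base => rfl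
  | succ k hnk ih =>
    obtain ⟨g, hg⟩ := hf k
    rw [prod_range_succ, hg, mul_add, mul_one, mul_left_comm, map_add, ih,
      PowerSeries.coeff_X_pow_mul', if_neg (by lia), add_zero]

lemma coeff_prod_range_eq_of_hasProd {R : Type*} [CommSemiring R] [TopologicalSpace R] [T2Space R]
    {f : ℕ → PowerSeries R} {F : PowerSeries R}
    (hf : ∀ i, ∃ g, f i = 1 + PowerSeries.X ^ (i + 1) * g) (hF : HasProd f F)
    {n k : ℕ} (hnk : n ≤ k) :
    PowerSeries.coeff n (∏ i ∈ range k, f i) = PowerSeries.coeff n F := by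
  have hlim := ((continuous_coeff R n).tendsto F).comp hF.tendsto_prod_nat
  refine tendsto_nhds_unique (tendsto_atTop_of_eventually_const (i₀ := n) fun l hl ↦ ?_) hlim
  exact (coeff_prod_range_of_le hf hl).trans (coeff_prod_range_of_le hf hnk).symm

/-- The product of the first `k` factors of Glaisher's generating function
`∏ i ≥ 1, (1 + X ^ i + ⋯ + X ^ ((m - 1) * i))` of the `m`-regular partitions. It is a polynomial
so that it can be evaluated at integers. -/
noncomputable def glaisherPoly (m k : ℕ) : ℕ[X] :=
  ∏ i ∈ range k, ∑ j ∈ range m, X ^ ((i + 1) * j)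

lemma coe_glaisherPoly (m k : ℕ) :
    (glaisherPoly m k : PowerSeries ℕ) =
      ∏ i ∈ range k, ∑ j ∈ range m, PowerSeries.X ^ ((i + 1) * j) := by
  rw [glaisherPoly, ← coeToPowerSeries.ringHom_apply, map_prod]
  simp

lemma eval_glaisherPoly (m k x : ℕ) :
    (glaisherPoly m k).eval x = ∏ i ∈ range k, ∑ j ∈ range m, x ^ ((i + 1) * j) := by
  simp [glaisherPoly, eval_prod, eval_finsetSum]

lemma bReg_eq_card_countRestricted {m : ℕ} (hm : 0 < m) (n : ℕ) :
    bReg m n = #(Nat.Partition.countRestricted n m) := by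
  rw [← Nat.Partition.card_restricted_eq_card_countRestricted n hm, bReg, Nat.Partition.restricted]

lemma coeff_glaisherPoly {m n k : ℕ} (hm : 0 < m) (hnk : n ≤ k) :
    (glaisherPoly m k).coeff n = bReg m n := by
  have hfactor (i : ℕ) : ∃ g : PowerSeries ℕ,
      ∑ j ∈ range m, PowerSeries.X ^ ((i + 1) * j) = 1 + PowerSeries.X ^ (i + 1) * g := by
    obtain ⟨l, rfl⟩ := Nat.exists_eq_add_one_of_ne_zero hm.ne'
    simp only [pow_mul]
    exact ⟨_, by rw [geom_sum_succ, add_comm]⟩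
  rw [← coeff_coe, coe_glaisherPoly, bReg_eq_card_countRestricted hm,
    coeff_prod_range_eq_of_hasProd hfactor
      (Nat.Partition.hasProd_powerSeriesMk_card_countRestricted ℕ hm) hnk,
    PowerSeries.coeff_mk, Nat.cast_id]

lemma eval_mod_pow_div_pow {p : ℕ[X]} {x n : ℕ} (hp : ∀ i ≤ n, p.coeff i < x) :
    p.eval x % x ^ (n + 1) / x ^ n = p.coeff n := by
  rw [pow_succ, Nat.mod_mul_right_div_self]
  have heval (q : ℕ[X]) : q.eval x = x * q.divX.eval x + q.coeff 0 := by
    conv_lhs => rw [← divX_mul_X_add q]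
    simp [mul_comm]
  induction n generalizing p with
  | zero => rw [heval, pow_zero, Nat.div_one, Nat.mul_add_mod, Nat.mod_eq_of_lt (hp 0 le_rfl)]
  | succ n ih =>
    have h0 : p.coeff 0 < x := hp 0 (Nat.zero_le _)
    have hdiv : p.eval x / x = p.divX.eval x := by
      rw [heval, Nat.mul_add_div (by lia), Nat.div_eq_of_lt h0, add_zero]
    rw [pow_succ', ← Nat.div_div_eq_div_mul, hdiv, ← coeff_divX]
    exact ih fun i hi ↦ coeff_divX (p := p) ▸ hp (i + 1) (by lia)

/-- The product `∏ i ∈ range k, f i` modulo `M`, reduced after every multiplication so that the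
kernel evaluates it on numbers of bounded size. -/
def prodMod (f : ℕ → ℕ) (M : ℕ) : ℕ → ℕ
  | 0 => 1 % M
  | k + 1 => prodMod f M k * f k % M

lemma prodMod_eq (f : ℕ → ℕ) (M k : ℕ) : prodMod f M k = (∏ i ∈ range k, f i) % M := by
  induction k with
  | zero => rfl
  | succ k ih => rw [prodMod, ih, Nat.mod_mul_mod, prod_range_succ]

lemma card_partition_le_two_pow (n : ℕ) : Fintype.card n.Partition ≤ 2 ^ (n - 1) :=
  composition_card n ▸ Fintype.card_le_of_surjective _ Nat.Partition.ofComposition_surj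

theorem bReg_eq_prodMod_div {m n x : ℕ} (hm : 0 < m) (hx : 2 ^ (n - 1) < x) :
    bReg m n = prodMod (fun i ↦ ∑ j ∈ range m, x ^ ((i + 1) * j)) (x ^ (n + 1)) n / x ^ n := by
  have hcoeff (i : ℕ) (hi : i ≤ n) : (glaisherPoly m n).coeff i < x := by
    calc (glaisherPoly m n).coeff i = bReg m i := coeff_glaisherPoly hm hi
      _ ≤ Fintype.card i.Partition := card_le_univ _
      _ ≤ 2 ^ (i - 1) := card_partition_le_two_pow i
      _ ≤ 2 ^ (n - 1) := by gcongr; exact one_le_two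
      _ < x := hx
  rw [prodMod_eq, ← eval_glaisherPoly, eval_mod_pow_div_pow hcoeff, coeff_glaisherPoly hm le_rfl]

theorem bReg_four_398 : bReg 4 398 = 29400557676581008 := by
  rw [bReg_eq_prodMod_div (x := 2 ^ 398) four_pos (Nat.pow_lt_pow_right one_lt_two (by lia))]
  decide +kernel

/-- `b_4(398) ≢ 0 (mod 3)`: the candidate family
`b_4(3l(ln+j) + (17l²-1)/8) ≡ 0 (mod 3)` fails for `l = 13`, `n = 0`, `j = 1`,
since `3·13·(13·0+1) + (17·13²-1)/8 = 398`. -/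
theorem b4_398_not_zero_mod_three :
    3 * 13 * (13 * 0 + 1) + (17 * 13 ^ 2 - 1) / 8 = 398 ∧
    bReg 4 398 % 3 ≠ 0 := by
  refine ⟨by norm_num, ?_⟩
  rw [bReg_four_398]
  norm_num
end
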